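/- Let E ⊆ X be a set of finite perimeter. Then there is a constant c > 0 depending only on C_d and C_P such that for 𝓗-a.e. x ∈ ∂*E (that is, for all x in ∂*E outside an 𝓗-null set) one has c ≤ liminf_{r→0} r·P(E,B(x,r))/μ(B(x,r)) ≤ limsup_{r→0} r·P(E,B(x,r))/μ(B(x,r)) ≤ C_d. -/

import Mathlib

open MeasureTheory Metric Filter Set Topology
open scoped NNReal ENNReal

noncomputable section

universe u

/-- The measure `μ` is doubling with constant `Cd`:
`0 < μ(B(x,2r)) ≤ Cd·μ(B(x,r)) < ∞` for every `x` and every `r > 0`. -/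
def IsDoublingWith {X : Type u} [PseudoMetricSpace X] [MeasurableSpace X]
    (μ : Measure X) (Cd : ℝ≥0) : Prop :=
  ∀ (x : X) (r : ℝ), 0 < r →
    0 < μ (ball x (2 * r)) ∧
      μ (ball x (2 * r)) ≤ (Cd : ℝ≥0∞) * μ (ball x r) ∧
      (Cd : ℝ≥0∞) * μ (ball x r) < ⊤

/-- `X` is a geodesic space: any two points are joined by a unit-speed geodesic. -/
def IsGeodesic (X : Type u) [PseudoMetricSpace X] : Prop :=
  ∀ x y : X, ∃ γ : ℝ → X,
    LipschitzOnWith 1 γ (Icc 0 (dist x y)) ∧ γ 0 = x ∧ γ (dist x y) = y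

/-- `g` is an upper gradient of `u`: for every `L ≥ 0` and every `1`-Lipschitz curve
`γ : [0,L] → X`, `|u(γ 0) − u(γ L)| ≤ ∫₀^L g(γ t) dt`. -/
def IsUpperGradientOf {X : Type u} [PseudoMetricSpace X] (g u : X → ℝ) : Prop :=
  ∀ L : ℝ, 0 ≤ L → ∀ γ : ℝ → X, LipschitzOnWith 1 γ (Icc 0 L) →
    |u (γ 0) - u (γ L)| ≤ ∫ t in (0:ℝ)..L, g (γ t)

/-- The lower pointwise Lipschitz constant
`lip u (x) = liminf_{r→0} r⁻¹ sup_{y ∈ B(x,r)} |u y − u x|`. -/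
def lipConst {X : Type u} [PseudoMetricSpace X] (u : X → ℝ) (x : X) : ℝ≥0∞ :=
  Filter.liminf
    (fun r : ℝ => ⨆ y ∈ ball x r, ENNReal.ofReal (|u y - u x| / r)) (𝓝[>] (0:ℝ))

/-- `u` is locally Lipschitz on `W`: Lipschitz on every closed bounded subset of `W`. -/
def LocallyLipschitzOnSet {X : Type u} [PseudoMetricSpace X] (u : X → ℝ) (W : Set X) : Prop :=
  ∀ K : Set X, IsClosed K → Bornology.IsBounded K → K ⊆ W →
    ∃ L : ℝ≥0, LipschitzOnWith L u K

/-- `u i → f` in `L¹_loc(W)`. -/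
def TendstoL1loc {X : Type u} [PseudoMetricSpace X] [MeasurableSpace X]
    (μ : Measure X) (u : ℕ → X → ℝ) (f : X → ℝ) (W : Set X) : Prop :=
  ∀ K : Set X, IsClosed K → Bornology.IsBounded K → K ⊆ W →
    Tendsto (fun i => ∫⁻ x in K, ENNReal.ofReal |u i x - f x| ∂μ) atTop (𝓝 0)

/-- Total variation `V(f,W)` of `f` on an open set `W`:
the infimum over sequences of locally Lipschitz functions converging to `f` in `L¹_loc(W)`
of the liminf of `∫_W lip u_i dμ`. -/
def totVarOn {X : Type u} [PseudoMetricSpace X] [MeasurableSpace X]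
    (μ : Measure X) (f : X → ℝ) (W : Set X) : ℝ≥0∞ :=
  ⨅ (us : ℕ → X → ℝ) (_ : ∀ i, LocallyLipschitzOnSet (us i) W)
    (_ : TendstoL1loc μ us f W),
    Filter.liminf (fun i => ∫⁻ x in W, lipConst (us i) x ∂μ) atTop

/-- Total variation `V(f,A)` of `f` on an arbitrary set `A`:
infimum of `V(f,W)` over open `W ⊇ A`. -/
def totVarSet {X : Type u} [PseudoMetricSpace X] [MeasurableSpace X]
    (μ : Measure X) (f : X → ℝ) (A : Set X) : ℝ≥0∞ :=
  ⨅ (W : Set X) (_ : IsOpen W) (_ : A ⊆ W), totVarOn μ f W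

/-- `f` is of bounded variation: locally integrable and `V(f,X) < ∞`. -/
def IsBV {X : Type u} [MetricSpace X] [MeasurableSpace X]
    (μ : Measure X) (f : X → ℝ) : Prop :=
  LocallyIntegrable f μ ∧ totVarOn μ f Set.univ < ⊤

/-- `(X,d,μ)` supports a `1`-Poincaré inequality with constant `CP`. -/
def SupportsPoincare {X : Type u} [MetricSpace X] [MeasurableSpace X]
    (μ : Measure X) (CP : ℝ) : Prop :=
  ∀ u : X → ℝ, LocallyLipschitzOnSet u Set.univ →
    ∀ g : X → ℝ, (∀ x, 0 ≤ g x) → Measurable g → IsUpperGradientOf g u →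
      ∀ (x : X) (r : ℝ), 0 < r →
        (⨍ y in ball x r, |u y - (⨍ z in ball x r, u z ∂μ)| ∂μ) ≤
          CP * r * (⨍ y in ball x r, g y ∂μ)

/-- Standing assumptions: a complete geodesic metric measure space with at least two
points, whose measure is doubling and supports a 1-Poincaré inequality. -/
def GoodSpace (X : Type u) [MetricSpace X] [MeasurableSpace X]
    (μ : Measure X) (Cd : ℝ≥0) (CP : ℝ) : Prop :=
  Nontrivial X ∧ CompleteSpace X ∧ IsGeodesic X ∧
    IsDoublingWith μ Cd ∧ SupportsPoincare μ CP

/-- The codimension-1 Hausdorff measure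
`𝓗(A) = sup_{δ>0} inf { Σ μ(B_i)/r_i : 0 < r_i ≤ δ, A ⊆ ⋃ B_i }`,
the infimum over countable coverings of `A` by balls (balls of nonpositive radius
are empty and contribute `0`). -/
def codimOneH {X : Type u} [PseudoMetricSpace X] [MeasurableSpace X]
    (μ : Measure X) (A : Set X) : ℝ≥0∞ :=
  ⨆ (δ : ℝ) (_ : 0 < δ),
    ⨅ (c : ℕ → X) (r : ℕ → ℝ) (_ : ∀ i, r i ≤ δ)
      (_ : A ⊆ ⋃ i, ball (c i) (r i)),
      ∑' i, if 0 < r i then μ (ball (c i) (r i)) / ENNReal.ofReal (r i) else 0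

/-- The measure theoretic boundary `∂*E`. -/
def measBdry {X : Type u} [PseudoMetricSpace X] [MeasurableSpace X]
    (μ : Measure X) (E : Set X) : Set X :=
  {x : X |
    0 < Filter.limsup (fun r : ℝ => μ (E ∩ ball x r) / μ (ball x r)) (𝓝[>] (0:ℝ)) ∧
    0 < Filter.limsup (fun r : ℝ => μ (Eᶜ ∩ ball x r) / μ (ball x r)) (𝓝[>] (0:ℝ))}

/-- `A` has density `0` at `x`. -/
def DensityZeroAt {X : Type u} [PseudoMetricSpace X] [MeasurableSpace X]
    (μ : Measure X) (A : Set X) (x : X) : Prop :=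
  Tendsto (fun r : ℝ => μ (A ∩ ball x r) / μ (ball x r)) (𝓝[>] (0:ℝ)) (𝓝 0)

/-- `A` has density `1` at `x`. -/
def DensityOneAt {X : Type u} [PseudoMetricSpace X] [MeasurableSpace X]
    (μ : Measure X) (A : Set X) (x : X) : Prop :=
  Tendsto (fun r : ℝ => μ (A ∩ ball x r) / μ (ball x r)) (𝓝[>] (0:ℝ)) (𝓝 1)

/-- `x` is a Lebesgue point of `u`. -/
def LebesguePointOf {X : Type u} [MetricSpace X] [MeasurableSpace X]
    (μ : Measure X) (u : X → ℝ) (x : X) : Prop :=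
  Tendsto (fun r : ℝ => ⨍ y in ball x r, |u y - u x| ∂μ) (𝓝[>] (0:ℝ)) (𝓝 0)

/-- `u` is a Borel representative whose value at each Lebesgue point equals the limit
of its ball averages. -/
def PreciseRep {X : Type u} [MetricSpace X] [MeasurableSpace X]
    (μ : Measure X) (u : X → ℝ) : Prop :=
  Measurable u ∧ ∀ (x : X) (c : ℝ),
    Tendsto (fun r : ℝ => ⨍ y in ball x r, u y ∂μ) (𝓝[>] (0:ℝ)) (𝓝 c) → u x = c

/-- The restricted maximal function `M_R ν (x) = sup_{0<r≤R} ν(B(x,r))/μ(B(x,r))`. -/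
def restrMaximal {X : Type u} [PseudoMetricSpace X] [MeasurableSpace X]
    (μ ν : Measure X) (R : ℝ) (x : X) : ℝ≥0∞ :=
  ⨆ (r : ℝ) (_ : 0 < r) (_ : r ≤ R), ν (ball x r) / μ (ball x r)

/-- `F_g(x,y)`: the infimum of `∫_γ g ds` over 1-Lipschitz curves `γ : [0,L] → Z`
joining `x` to `y` (the infimum over the empty set is `∞`). -/
def curveInf {Z : Type u} [PseudoMetricSpace Z] (g : Z → ℝ) (x y : Z) : ℝ≥0∞ :=
  ⨅ (L : ℝ) (_ : 0 ≤ L) (γ : ℝ → Z) (_ : LipschitzOnWith 1 γ (Icc 0 L))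
    (_ : γ 0 = x) (_ : γ L = y),
    ∫⁻ t in Icc (0:ℝ) L, ENNReal.ofReal (g (γ t))

/-- Weak-star convergence of measures: test against continuous, compactly
supported functions. -/
def WeakStar {Z : Type u} [MetricSpace Z] [MeasurableSpace Z]
    (ν : ℕ → Measure Z) (m : Measure Z) : Prop :=
  ∀ φ : Z → ℝ, Continuous φ → HasCompactSupport φ →
    Tendsto (fun n => ∫ x, φ x ∂(ν n)) atTop (𝓝 (∫ x, φ x ∂m))

/-- `φ ∈ BV_c(U)`: a BV function whose support is compact and contained in `U`. -/
def MemBVc {X : Type u} [MetricSpace X] [MeasurableSpace X]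
    (μ : Measure X) (φ : X → ℝ) (U : Set X) : Prop :=
  IsBV μ φ ∧ IsCompact (tsupport φ) ∧ tsupport φ ⊆ U

/-!
The perimeter `P(E, ·)` enters only through its superadditivity on disjoint open sets, its lower
semicontinuity under `L¹` convergence, and the relative isoperimetric inequality coming from the
Poincaré inequality.

Cutting `E` out of a ball `B(x, r)` along a good radius between `r` and `2r` creates perimeter at
most about `μ(E ∩ B(x, 2r)) / r` and destroys all of `P(E, B(x, r))`. If the cost is at most a fixed
fraction `t < 1` of the gain for arbitrarily small `r`, at a set of points which is not `𝓗`-null,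
then disjoint Vitali balls make `P(E, X)` drop by a definite amount under arbitrarily small
`L¹` perturbations of `E`, against lower semicontinuity. So such points are `𝓗`-negligible.

For the upper bound, where the upper density exceeds `Cd` the cost `μ(B(x, 2r)) / r` is itself
smaller than `P(E, B(x, r))`. For the lower bound, where the lower density is below a small `c`
there are small radii `r` at which the density is small at `8r` and does not grow much from `r` to
`4r`. The isoperimetric inequality then makes `E` or its complement very thin in `B(x, 4r)`, and
covering the thin part by balls of radius much smaller than `r` in which it has intermediate density
bounds its mass by a small multiple of `r P(E, B(x, r))`: cutting is again profitable, for `E` or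
for its complement.
-/

section LipConst

variable {X : Type u} [PseudoMetricSpace X]

/-- The slope `r⁻¹ · sup_{y ∈ B(x,r)} |u y - u x|` of `u` at `x` on scale `r`; the lower pointwise
Lipschitz constant `lipConst u x` is its lower limit as `r → 0⁺`. -/
def supSlope (u : X → ℝ) (x : X) (r : ℝ) : ℝ≥0∞ :=
  ⨆ y ∈ ball x r, ENNReal.ofReal (|u y - u x| / r)

lemma lipConst_eq_liminf_supSlope (u : X → ℝ) (x : X) :
    lipConst u x = liminf (supSlope u x) (𝓝[>] 0) := rfl

lemma le_supSlope (u : X → ℝ) {x y : X} {r : ℝ} (hy : y ∈ ball x r) :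
    ENNReal.ofReal (|u y - u x| / r) ≤ supSlope u x r :=
  le_iSup₂ (f := fun y (_ : y ∈ ball x r) => ENNReal.ofReal (|u y - u x| / r)) y hy

lemma supSlope_le_mul (u : X → ℝ) (x : X) {q r : ℝ} (hq : 0 < q) (hqr : q ≤ r) :
    supSlope u x q ≤ ENNReal.ofReal (r / q) * supSlope u x r := by
  have hr : 0 < r := hq.trans_le hqr
  refine iSup₂_le fun y hy => ?_
  calc ENNReal.ofReal (|u y - u x| / q)
      = ENNReal.ofReal (r / q) * ENNReal.ofReal (|u y - u x| / r) := by
        rw [← ENNReal.ofReal_mul (by positivity)]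
        congr 1
        field_simp
    _ ≤ ENNReal.ofReal (r / q) * supSlope u x r := by
        gcongr
        exact le_supSlope u (ball_subset_ball hqr hy)

lemma lipConst_congr {u v : X → ℝ} {x : X} (h : u =ᶠ[𝓝 x] v) :
    lipConst u x = lipConst v x := by
  obtain ⟨ε, hε, hb⟩ := Metric.eventually_nhds_iff_ball.1 h
  refine liminf_congr ?_
  filter_upwards [Ioo_mem_nhdsGT hε] with r hr
  refine biSup_congr fun y hy => ?_
  rw [hb y (ball_subset_ball hr.2.le hy), hb x (mem_ball_self hε)]

lemma lipConst_const_sub (c : ℝ) (u : X → ℝ) (x : X) :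
    lipConst (fun y => c - u y) x = lipConst u x := by
  simp only [lipConst, sub_sub_sub_cancel_left, abs_sub_comm]

lemma lipConst_le_of_lipschitzOnWith {u : X → ℝ} {L : ℝ≥0} {s : Set X} {x : X}
    (h : LipschitzOnWith L u s) (hs : s ∈ 𝓝 x) : lipConst u x ≤ L := by
  obtain ⟨ε, hε, hb⟩ := Metric.mem_nhds_iff.1 hs
  refine liminf_le_of_frequently_le' (Eventually.frequently ?_)
  filter_upwards [Ioo_mem_nhdsGT hε] with r hr
  refine iSup₂_le fun y hy => ENNReal.ofReal_le_coe.2 ?_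
  rw [div_le_iff₀ hr.1, ← Real.dist_eq]
  calc dist (u y) (u x) ≤ L * dist y x :=
        h.dist_le_mul y (hb (ball_subset_ball hr.2.le hy)) x (mem_of_mem_nhds hs)
    _ ≤ L * r := mul_le_mul_of_nonneg_left (mem_ball.1 hy).le L.coe_nonneg

lemma lipConst_mul_le {u θ : X → ℝ} {x : X} {L : ℝ≥0} {s : Set X} (h0 : ∀ y, 0 ≤ θ y)
    (h1 : ∀ y, θ y ≤ 1) (hθ : LipschitzOnWith L θ s) (hs : s ∈ 𝓝 x) :
    lipConst (fun y => θ y * u y) x ≤ lipConst u x + L * ENNReal.ofReal |u x| := by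
  obtain ⟨ε, hε, hb⟩ := Metric.mem_nhds_iff.1 hs
  suffices hslope : ∀ᶠ r in 𝓝[>] (0 : ℝ), supSlope (fun y => θ y * u y) x r ≤
      supSlope u x r + L * ENNReal.ofReal |u x| by
    refine (liminf_le_liminf hslope).trans_eq ?_
    rw [liminf_add_const _ _ _ (by isBoundedDefault) (by isBoundedDefault),
      lipConst_eq_liminf_supSlope]
  filter_upwards [Ioo_mem_nhdsGT hε] with r hr
  have hr0 : 0 < r := hr.1
  refine iSup₂_le fun y hy => le_trans ?_ (add_le_add_left (le_supSlope u hy) _)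
  rw [← ENNReal.ofReal_coe_nnreal (p := L), ← ENNReal.ofReal_mul L.coe_nonneg,
    ← ENNReal.ofReal_add (by positivity) (by positivity)]
  refine ENNReal.ofReal_le_ofReal ?_
  rw [div_le_iff₀ hr0, add_mul, div_mul_cancel₀ _ hr0.ne']
  have hθyx : |θ y - θ x| ≤ L * r := by
    rw [← Real.dist_eq]
    exact (hθ.dist_le_mul y (hb (ball_subset_ball hr.2.le hy)) x (mem_of_mem_nhds hs)).trans
      (mul_le_mul_of_nonneg_left (mem_ball.1 hy).le L.coe_nonneg)
  calc |θ y * u y - θ x * u x| = |θ y * (u y - u x) + (θ y - θ x) * u x| := by ring_nf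
    _ ≤ |θ y| * |u y - u x| + |θ y - θ x| * |u x| := by
        simpa only [abs_mul] using abs_add_le (θ y * (u y - u x)) ((θ y - θ x) * u x)
    _ ≤ |u y - u x| + L * |u x| * r := by
        rw [mul_right_comm, abs_of_nonneg (h0 y)]
        gcongr
        exact mul_le_of_le_one_left (abs_nonneg _) (h1 y)

lemma iInf_supSlope_rat_le (u : X → ℝ) (x : X) {r ε : ℝ} (hr : r ∈ Ioo 0 ε) :
    ⨅ q : ℚ, ⨅ _ : (q : ℝ) ∈ Ioo 0 ε, supSlope u x q ≤ supSlope u x r := by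
  obtain ⟨q, -, hqr, hq⟩ := Real.exists_seq_rat_strictMono_tendsto r
  have hlim : Tendsto (fun k => ENNReal.ofReal (r / (q k : ℝ)) * supSlope u x r) atTop
      (𝓝 (supSlope u x r)) := by
    have hdiv : Tendsto (fun k => r / (q k : ℝ)) atTop (𝓝 1) := by
      have := (tendsto_const_nhds (x := r)).div hq hr.1.ne'
      rwa [div_self hr.1.ne'] at this
    simpa only [ENNReal.ofReal_one, one_mul] using
      ENNReal.Tendsto.mul_const (ENNReal.tendsto_ofReal hdiv) (Or.inl (by simp))
  refine ge_of_tendsto hlim ?_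
  filter_upwards [hq.eventually_const_lt hr.1] with k hk
  exact iInf₂_le_of_le (q k) ⟨hk, (hqr k).trans hr.2⟩ (supSlope_le_mul u x hk (hqr k).le)

lemma lipConst_eq_iSup_iInf_rat (u : X → ℝ) (x : X) :
    lipConst u x = ⨆ n : ℕ, ⨅ q : ℚ, ⨅ _ : (q : ℝ) ∈ Ioo 0 (1 / ((n : ℝ) + 1)),
      supSlope u x q := by
  have hbasis : (𝓝[>] (0 : ℝ)).HasBasis (fun _ : ℕ => True)
      (fun n : ℕ => Ioo (0 : ℝ) (1 / ((n : ℝ) + 1))) := by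
    refine (nhdsGT_basis (0 : ℝ)).to_hasBasis (fun ε hε => ?_) (fun n _ => ?_)
    · obtain ⟨n, hn⟩ := exists_nat_one_div_lt hε
      exact ⟨n, trivial, Ioo_subset_Ioo_right hn.le⟩
    · exact ⟨_, by positivity, le_rfl⟩
  rw [lipConst_eq_liminf_supSlope, hbasis.liminf_eq_iSup_iInf]
  simp only [iSup_true]
  refine iSup_congr fun n => le_antisymm ?_ ?_
  · exact le_iInf₂ fun q hq => iInf₂_le_of_le (q : ℝ) hq le_rfl
  · exact le_iInf₂ fun r hr => iInf_supSlope_rat_le u x hr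

lemma lowerSemicontinuous_supSlope {u : X → ℝ} (hu : Continuous u) (r : ℝ) :
    LowerSemicontinuous fun x => supSlope u x r := by
  intro x a ha
  obtain ⟨y, hy, hay⟩ : ∃ y, ∃ _ : y ∈ ball x r, a < ENNReal.ofReal (|u y - u x| / r) := by
    simpa only [supSlope, lt_iSup_iff] using ha
  have hslope : Continuous fun x => ENNReal.ofReal (|u y - u x| / r) :=
    ENNReal.continuous_ofReal.comp (by fun_prop)
  have hdist : Continuous fun x : X => dist y x := by fun_prop
  filter_upwards [(hslope.tendsto x).eventually_const_lt hay,
    (hdist.tendsto x).eventually_lt_const (mem_ball.1 hy)] with z hz hyz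
  exact hz.trans_le (le_supSlope u hyz)

lemma measurable_lipConst [MeasurableSpace X] [OpensMeasurableSpace X] {u : X → ℝ}
    (hu : Continuous u) : Measurable (lipConst u) := by
  rw [funext (lipConst_eq_iSup_iInf_rat u)]
  exact Measurable.iSup fun n => Measurable.iInf fun q => Measurable.iInf fun _ =>
    (lowerSemicontinuous_supSlope hu _).measurable

lemma LocallyLipschitzOnSet.mono {u : X → ℝ} {V W : Set X}
    (hu : LocallyLipschitzOnSet u W) (hVW : V ⊆ W) : LocallyLipschitzOnSet u V :=
  fun K hK hKb hKV => hu K hK hKb (hKV.trans hVW)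

lemma LocallyLipschitzOnSet.const_sub {u : X → ℝ} {W : Set X} (hu : LocallyLipschitzOnSet u W)
    (c : ℝ) : LocallyLipschitzOnSet (fun x => c - u x) W := by
  intro K hK hKb hKW
  obtain ⟨L, hL⟩ := hu K hK hKb hKW
  refine ⟨L, LipschitzOnWith.of_dist_le_mul fun x hx y hy => ?_⟩
  rw [dist_sub_left]
  exact hL.dist_le_mul x hx y hy

lemma LocallyLipschitzOnSet.exists_lipschitzOnWith_closedBall {u : X → ℝ} {W : Set X}
    (hu : LocallyLipschitzOnSet u W) (hW : IsOpen W) {x : X} (hx : x ∈ W) :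
    ∃ ε > 0, ∃ L : ℝ≥0, LipschitzOnWith L u (closedBall x ε) := by
  obtain ⟨ε, hε, hb⟩ := Metric.nhds_basis_closedBall.mem_iff.1 (hW.mem_nhds hx)
  exact ⟨ε, hε, hu _ isClosed_closedBall isBounded_closedBall hb⟩

lemma LocallyLipschitzOnSet.continuousOn {u : X → ℝ} {W : Set X}
    (hu : LocallyLipschitzOnSet u W) (hW : IsOpen W) : ContinuousOn u W := by
  intro x hx
  obtain ⟨ε, hε, L, hL⟩ := hu.exists_lipschitzOnWith_closedBall hW hx
  exact (hL.continuousOn.continuousAt (closedBall_mem_nhds x hε)).continuousWithinAt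

lemma LocallyLipschitzOnSet.continuous {u : X → ℝ}
    (hu : LocallyLipschitzOnSet u univ) : Continuous u :=
  continuousOn_univ.1 (hu.continuousOn isOpen_univ)

lemma LocallyLipschitzOnSet.exists_lipschitzOnWith_of_isBounded {u : X → ℝ}
    (hu : LocallyLipschitzOnSet u univ) {s : Set X} (hs : Bornology.IsBounded s) :
    ∃ L : ℝ≥0, LipschitzOnWith L u s := by
  obtain ⟨L, hL⟩ := hu (closure s) isClosed_closure hs.closure (subset_univ _)
  exact ⟨L, hL.mono subset_closure⟩

lemma LocallyLipschitzOnSet.exists_lipConst_le {u : X → ℝ} (hu : LocallyLipschitzOnSet u univ)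
    {s : Set X} (hs : Bornology.IsBounded s) : ∃ L : ℝ≥0, ∀ y ∈ s, lipConst u y ≤ L := by
  obtain ⟨L, hL⟩ := hu.exists_lipschitzOnWith_of_isBounded (hs.cthickening (δ := 1))
  refine ⟨L, fun y hy => lipConst_le_of_lipschitzOnWith hL ?_⟩
  exact mem_of_superset (ball_mem_nhds y one_pos)
    ((ball_subset_thickening hy 1).trans (thickening_subset_cthickening 1 s))

lemma abs_deriv_le_lipConst {u : X → ℝ} (hu : Continuous u) {γ : ℝ → X}
    (hγ : LipschitzWith 1 γ) {t f' : ℝ} (hderiv : HasDerivAt (fun s => u (γ s)) f' t) :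
    ENNReal.ofReal |f'| ≤ lipConst u (γ t) := by
  have hlim : Tendsto (fun r : ℝ => ENNReal.ofReal |r⁻¹ • (u (γ (t + r)) - u (γ t))|) (𝓝[>] 0)
      (𝓝 (ENNReal.ofReal |f'|)) :=
    ENNReal.tendsto_ofReal hderiv.tendsto_slope_zero_right.abs
  rw [← hlim.liminf_eq]
  refine liminf_le_liminf ?_
  filter_upwards [self_mem_nhdsWithin] with r (hr : 0 < r)
  have hquot : |r⁻¹ • (u (γ (t + r)) - u (γ t))| = |u (γ (t + r)) - u (γ t)| / r := by
    rw [smul_eq_mul, abs_mul, abs_inv, abs_of_pos hr, inv_mul_eq_div]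
  rw [hquot]
  -- `γ (t + r)` may lie on the boundary of the open ball `B(γ t, r)`: approach it from inside.
  have hcont : Continuous fun s : ℝ => ENNReal.ofReal (|u (γ (t + s)) - u (γ t)| / r) := by
    have := hγ.continuous
    exact ENNReal.continuous_ofReal.comp (by fun_prop)
  refine le_of_tendsto ((hcont.tendsto r).mono_left (nhdsWithin_le_nhds (s := Iio r))) ?_
  filter_upwards [Ioo_mem_nhdsLT hr] with s hs
  refine le_supSlope u (mem_ball.2 ((hγ.dist_le_mul _ _).trans_lt ?_))
  simpa [abs_of_pos hs.1] using hs.2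

lemma LocallyLipschitzOnSet.abs_sub_le_integral_lipConst [MeasurableSpace X] [BorelSpace X]
    {u : X → ℝ} (hu : LocallyLipschitzOnSet u univ) {γ : ℝ → X} (hγ : LipschitzWith 1 γ)
    {L : ℝ} (hL : 0 ≤ L) :
    |u (γ 0) - u (γ L)| ≤ ∫ t in (0 : ℝ)..L, (lipConst u (γ t)).toReal := by
  have hbdd : Bornology.IsBounded (γ '' Icc 0 L) := (isCompact_Icc.image hγ.continuous).isBounded
  obtain ⟨M, hM⟩ := hu.exists_lipConst_le hbdd
  obtain ⟨C, hC⟩ := hu.exists_lipschitzOnWith_of_isBounded hbdd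
  have hac : AbsolutelyContinuousOnInterval (u ∘ γ) 0 L := by
    refine LipschitzOnWith.absolutelyContinuousOnInterval (K := C * 1) ?_
    rw [uIcc_of_le hL]
    exact hC.comp hγ.lipschitzOnWith (mapsTo_image γ _)
  have hint : IntervalIntegrable (fun t => (lipConst u (γ t)).toReal) volume 0 L := by
    have hmeas : Measurable fun t => (lipConst u (γ t)).toReal :=
      ((measurable_lipConst hu.continuous).comp hγ.continuous.measurable).ennreal_toReal
    refine (intervalIntegrable_const (c := (M : ℝ))).mono_fun hmeas.aestronglyMeasurable ?_
    refine (ae_restrict_iff' measurableSet_uIoc).2 (Eventually.of_forall fun t ht => ?_)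
    rw [uIoc_of_le hL] at ht
    simpa only [Real.norm_eq_abs, ENNReal.abs_toReal, NNReal.abs_eq] using
      ENNReal.toReal_le_coe_of_le_coe (hM _ (mem_image_of_mem γ (Ioc_subset_Icc_self ht)))
  calc |u (γ 0) - u (γ L)| = |∫ t in (0 : ℝ)..L, deriv (u ∘ γ) t| := by
        rw [hac.integral_deriv_eq_sub, abs_sub_comm, Function.comp_apply, Function.comp_apply]
    _ ≤ ∫ t in (0 : ℝ)..L, |deriv (u ∘ γ) t| := intervalIntegral.abs_integral_le_integral_abs hL
    _ ≤ ∫ t in (0 : ℝ)..L, (lipConst u (γ t)).toReal := by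
        refine intervalIntegral.integral_mono_ae_restrict hL hac.intervalIntegrable_deriv.abs
          hint ((ae_restrict_iff' measurableSet_Icc).2 ?_)
        filter_upwards [hac.ae_differentiableAt] with t hdiff ht
        have hfin : lipConst u (γ t) ≠ ⊤ :=
          ne_top_of_le_ne_top ENNReal.coe_ne_top (hM _ (mem_image_of_mem γ ht))
        exact (ENNReal.ofReal_le_iff_le_toReal hfin).1 (abs_deriv_le_lipConst hu.continuous hγ
          (hdiff (by rwa [uIcc_of_le hL])).hasDerivAt)

lemma LocallyLipschitzOnSet.isUpperGradientOf_lipConst [MeasurableSpace X] [BorelSpace X]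
    {u : X → ℝ} (hu : LocallyLipschitzOnSet u univ) :
    IsUpperGradientOf (fun x => (lipConst u x).toReal) u := by
  intro L hL γ hγ
  have hext : LipschitzWith 1 fun t => γ (projIcc 0 L hL t) := by
    have := hγ.to_restrict.comp (LipschitzWith.projIcc hL)
    rwa [mul_one] at this
  have heq : ∀ t ∈ Icc 0 L, γ (projIcc 0 L hL t) = γ t := fun t ht => by rw [projIcc_of_mem hL ht]
  have hbound := hu.abs_sub_le_integral_lipConst hext hL
  rw [heq 0 (left_mem_Icc.2 hL), heq L (right_mem_Icc.2 hL)] at hbound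
  refine hbound.trans_eq (intervalIntegral.integral_congr fun t ht => ?_)
  rw [uIcc_of_le hL] at ht
  simp only [heq t ht]

end LipConst

section TotalVariation

lemma ennreal_liminf_add_liminf_le {ι : Type*} (u v : ι → ℝ≥0∞) (f : Filter ι) :
    liminf u f + liminf v f ≤ liminf (fun i => u i + v i) f := by
  simp only [liminf_eq_iSup_iInf]
  refine ENNReal.biSup_add_biSup_le' ⟨univ, univ_mem⟩ ⟨univ, univ_mem⟩ fun s hs t ht => ?_
  refine le_iSup₂_of_le (s ∩ t) (inter_mem hs ht) (le_iInf₂ fun i hi => ?_)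
  exact add_le_add (iInf₂_le i hi.1) (iInf₂_le i hi.2)

variable {X : Type u} [PseudoMetricSpace X] [MeasurableSpace X] {μ : Measure X}

lemma TendstoL1loc.mono {us : ℕ → X → ℝ} {f : X → ℝ} {V W : Set X}
    (h : TendstoL1loc μ us f W) (hVW : V ⊆ W) : TendstoL1loc μ us f V :=
  fun K hK hKb hKV => h K hK hKb (hKV.trans hVW)

lemma totVarOn_le_liminf {us : ℕ → X → ℝ} {f : X → ℝ} {W : Set X}
    (hus : ∀ i, LocallyLipschitzOnSet (us i) W) (hlim : TendstoL1loc μ us f W) :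
    totVarOn μ f W ≤ liminf (fun i => ∫⁻ x in W, lipConst (us i) x ∂μ) atTop :=
  iInf_le_of_le us (iInf₂_le hus hlim)

lemma totVarOn_mono (f : X → ℝ) {V W : Set X} (h : V ⊆ W) :
    totVarOn μ f V ≤ totVarOn μ f W :=
  le_iInf fun _ => le_iInf₂ fun hus hlim =>
    (totVarOn_le_liminf (fun i => (hus i).mono h) (hlim.mono h)).trans
      (liminf_le_liminf (Eventually.of_forall fun _ => lintegral_mono_set h))

lemma totVarOn_add_le [OpensMeasurableSpace X] (f : X → ℝ) {V W : Set X} (hW : IsOpen W)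
    (hdisj : Disjoint V W) : totVarOn μ f V + totVarOn μ f W ≤ totVarOn μ f (V ∪ W) := by
  refine le_iInf fun us => le_iInf₂ fun hus hlim => ?_
  calc totVarOn μ f V + totVarOn μ f W
      ≤ liminf (fun i => ∫⁻ x in V, lipConst (us i) x ∂μ) atTop +
          liminf (fun i => ∫⁻ x in W, lipConst (us i) x ∂μ) atTop :=
        add_le_add
          (totVarOn_le_liminf (fun i => (hus i).mono subset_union_left)
            (hlim.mono subset_union_left))
          (totVarOn_le_liminf (fun i => (hus i).mono subset_union_right)
            (hlim.mono subset_union_right))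
    _ ≤ liminf (fun i => ∫⁻ x in V ∪ W, lipConst (us i) x ∂μ) atTop := by
        simp only [lintegral_union hW.measurableSet hdisj]
        exact ennreal_liminf_add_liminf_le _ _ _

lemma sum_totVarOn_le [OpensMeasurableSpace X] (f : X → ℝ) {ι : Type*} (s : Finset ι)
    {V : ι → Set X} (hV : ∀ i ∈ s, IsOpen (V i)) (hdisj : (s : Set ι).PairwiseDisjoint V) :
    ∑ i ∈ s, totVarOn μ f (V i) ≤ totVarOn μ f (⋃ i ∈ s, V i) := by
  classical
  induction s using Finset.induction_on with
  | empty => simp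
  | insert a s ha ih =>
    have hVs : ∀ i ∈ s, IsOpen (V i) := fun i hi => hV i (Finset.mem_insert_of_mem hi)
    have hdisj_a : Disjoint (V a) (⋃ i ∈ s, V i) :=
      disjoint_iUnion₂_right.2 fun i hi =>
        hdisj (by simp) (by simp [hi]) (ne_of_mem_of_not_mem hi ha).symm
    rw [Finset.sum_insert ha, Finset.set_biUnion_insert]
    exact (add_le_add_right (ih hVs (hdisj.subset (by simp))) _).trans
      (totVarOn_add_le f (isOpen_biUnion hVs) hdisj_a)

lemma sum_totVarOn_le_of_subset [OpensMeasurableSpace X] (f : X → ℝ) {ι : Type*} (s : Finset ι)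
    {V : ι → Set X} {W : Set X} (hV : ∀ i ∈ s, IsOpen (V i))
    (hdisj : (s : Set ι).PairwiseDisjoint V) (hW : ∀ i ∈ s, V i ⊆ W) :
    ∑ i ∈ s, totVarOn μ f (V i) ≤ totVarOn μ f W :=
  (sum_totVarOn_le f s hV hdisj).trans (totVarOn_mono f (iUnion₂_subset hW))

lemma tsum_totVarOn_le_of_subset [OpensMeasurableSpace X] (f : X → ℝ) {ι : Type*}
    {V : ι → Set X} {W : Set X} (hV : ∀ i, IsOpen (V i))
    (hdisj : Pairwise (Function.onFun Disjoint V)) (hW : ∀ i, V i ⊆ W) :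
    ∑' i, totVarOn μ f (V i) ≤ totVarOn μ f W := by
  rw [ENNReal.tsum_eq_iSup_sum]
  exact iSup_le fun s =>
    sum_totVarOn_le_of_subset f s (fun i _ => hV i) (hdisj.set_pairwise _) fun i _ => hW i

lemma exists_lintegral_lipConst_le_totVarOn_add {f : X → ℝ} {W K : Set X}
    (hfin : totVarOn μ f W ≠ ⊤) (hK : IsClosed K) (hKb : Bornology.IsBounded K) (hKW : K ⊆ W)
    {ε η : ℝ≥0∞} (hε : ε ≠ 0) (hη : η ≠ 0) :
    ∃ u : X → ℝ, LocallyLipschitzOnSet u W ∧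
      ∫⁻ x in W, lipConst u x ∂μ ≤ totVarOn μ f W + ε ∧
      ∫⁻ x in K, ENNReal.ofReal |u x - f x| ∂μ ≤ η := by
  obtain ⟨us, h⟩ := iInf_lt_iff.1 (ENNReal.lt_add_right hfin hε)
  obtain ⟨hus, h⟩ := iInf_lt_iff.1 h
  obtain ⟨hlim, hlt⟩ := iInf_lt_iff.1 h
  obtain ⟨k, hk, hkη⟩ := ((frequently_lt_of_liminf_lt (by isBoundedDefault) hlt).and_eventually
    ((hlim K hK hKb hKW).eventually_le_const (pos_iff_ne_zero.2 hη))).exists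
  exact ⟨us k, hus k, hk.le, hkη⟩

lemma totVarOn_univ_add_le_of_forall_exists {f : X → ℝ} {a b : ℝ≥0∞} (x₀ : X)
    (h : ∀ ε : ℝ≥0∞, ε ≠ 0 → ∀ R : ℝ, ∃ v : X → ℝ, LocallyLipschitzOnSet v univ ∧
      ∫⁻ x, lipConst v x ∂μ + b ≤ a + ε ∧
      ∫⁻ x in closedBall x₀ R, ENNReal.ofReal |v x - f x| ∂μ ≤ ε) :
    totVarOn μ f univ + b ≤ a := by
  have hinv : Tendsto (fun n : ℕ => ((n : ℝ≥0∞) + 1)⁻¹) atTop (𝓝 0) := by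
    simpa using (tendsto_add_atTop_iff_nat 1).2 ENNReal.tendsto_inv_nat_nhds_zero
  choose v hv hlip hdist using fun n : ℕ => h ((n : ℝ≥0∞) + 1)⁻¹ (by simp) n
  have hlim : TendstoL1loc μ v f univ := by
    intro K _ hKb _
    obtain ⟨R, hR⟩ := hKb.subset_closedBall x₀
    refine tendsto_of_tendsto_of_tendsto_of_le_of_le' tendsto_const_nhds hinv
      (Eventually.of_forall fun _ => bot_le) ?_
    filter_upwards [eventually_ge_atTop ⌈R⌉₊] with n hn
    exact (lintegral_mono_set (hR.trans (closedBall_subset_closedBall (Nat.ceil_le.1 hn)))).trans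
      (hdist n)
  calc totVarOn μ f univ + b ≤ liminf (fun n => ∫⁻ x in univ, lipConst (v n) x ∂μ) atTop + b :=
        add_le_add_left (totVarOn_le_liminf hv hlim) b
    _ = liminf (fun n => ∫⁻ x, lipConst (v n) x ∂μ + b) atTop := by
        simp only [Measure.restrict_univ]
        exact (liminf_add_const _ _ _ (by isBoundedDefault) (by isBoundedDefault)).symm
    _ ≤ liminf (fun n : ℕ => a + ((n : ℝ≥0∞) + 1)⁻¹) atTop :=
        liminf_le_liminf (Eventually.of_forall hlip)
    _ = a := by simpa only [add_zero] using (hinv.const_add a).liminf_eq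

lemma totVarOn_const_sub_le (c : ℝ) (f : X → ℝ) (W : Set X) :
    totVarOn μ (fun x => c - f x) W ≤ totVarOn μ f W := by
  refine le_iInf fun us => le_iInf₂ fun hus hlim => ?_
  refine (totVarOn_le_liminf (us := fun i x => c - us i x) (fun i => (hus i).const_sub c)
    fun K hK hKb hKW => ?_).trans_eq ?_
  · simpa only [sub_sub_sub_cancel_left, abs_sub_comm] using hlim K hK hKb hKW
  · simp only [lipConst_const_sub]

/-- The perimeter of `E` in the open set `W`, i.e. the total variation of the characteristic
function of `E`. -/
abbrev perimeterOn (μ : Measure X) (E W : Set X) : ℝ≥0∞ :=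
  totVarOn μ (E.indicator fun _ => (1 : ℝ)) W

lemma perimeterOn_compl_le (E W : Set X) : perimeterOn μ Eᶜ W ≤ perimeterOn μ E W := by
  have hχ : (Eᶜ.indicator fun _ => (1 : ℝ)) = fun x => 1 - E.indicator (fun _ => (1 : ℝ)) x := by
    funext x
    by_cases hx : x ∈ E <;> simp [hx]
  rw [perimeterOn, hχ]
  exact totVarOn_const_sub_le 1 _ W

lemma perimeterOn_compl (E W : Set X) : perimeterOn μ Eᶜ W = perimeterOn μ E W :=
  le_antisymm (perimeterOn_compl_le E W)
    (by simpa only [compl_compl] using perimeterOn_compl_le (μ := μ) Eᶜ W)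

end TotalVariation

section Doubling

variable {X : Type u} [PseudoMetricSpace X] [MeasurableSpace X] {μ : Measure X} {Cd : ℝ≥0}

lemma IsDoublingWith.ball_pos (hd : IsDoublingWith μ Cd) (x : X) {r : ℝ} (hr : 0 < r) :
    0 < μ (ball x r) := by
  simpa only [mul_div_cancel₀ r two_ne_zero] using (hd x (r / 2) (by positivity)).1

lemma IsDoublingWith.ball_lt_top (hd : IsDoublingWith μ Cd) (x : X) (r : ℝ) :
    μ (ball x r) < ⊤ := by
  obtain ⟨-, hle, hlt⟩ := hd x (max r 1 / 2) (by positivity)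
  rw [mul_div_cancel₀ _ two_ne_zero] at hle
  exact (measure_mono (ball_subset_ball (le_max_left _ _))).trans_lt (hle.trans_lt hlt)

lemma IsDoublingWith.one_le (hd : IsDoublingWith μ Cd) (x : X) : 1 ≤ Cd := by
  have hle : μ (ball x 1) ≤ Cd * μ (ball x 1) :=
    (measure_mono (ball_subset_ball (by norm_num))).trans (hd x 1 one_pos).2.1
  rw [← ENNReal.one_le_coe_iff, ← ENNReal.mul_le_mul_iff_left (hd.ball_pos x one_pos).ne'
    (hd.ball_lt_top x 1).ne, one_mul]
  exact hle

lemma IsDoublingWith.ball_le (hd : IsDoublingWith μ Cd) (x : X) {r : ℝ} (hr : 0 < r) (n : ℕ) :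
    μ (ball x (2 ^ n * r)) ≤ (Cd : ℝ≥0∞) ^ n * μ (ball x r) := by
  induction n with
  | zero => simp
  | succ n ih =>
    rw [pow_succ' 2, mul_assoc, pow_succ', mul_assoc]
    exact (hd x _ (by positivity)).2.1.trans (mul_le_mul_right ih _)

lemma IsDoublingWith.measure_le_of_subset_ball (hd : IsDoublingWith μ Cd) {x : X} {r : ℝ}
    (hr : 0 < r) (n : ℕ) {s : Set X} (hs : s ⊆ ball x (2 ^ n * r)) :
    μ s ≤ (Cd : ℝ≥0∞) ^ n * μ (ball x r) :=
  (measure_mono hs).trans (hd.ball_le x hr n)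

lemma IsDoublingWith.isLocallyFiniteMeasure (hd : IsDoublingWith μ Cd) :
    IsLocallyFiniteMeasure μ :=
  ⟨fun x => ⟨ball x 1, ball_mem_nhds x one_pos, hd.ball_lt_top x 1⟩⟩

lemma IsDoublingWith.isUnifLocDoublingMeasure (hd : IsDoublingWith μ Cd) :
    IsUnifLocDoublingMeasure μ := by
  refine ⟨⟨Cd ^ 2, ?_⟩⟩
  filter_upwards [self_mem_nhdsWithin] with r (hr : 0 < r) x
  rw [ENNReal.coe_pow]
  exact (hd.measure_le_of_subset_ball hr 2 (closedBall_subset_ball (by linarith))).trans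
    (mul_le_mul_right (measure_mono ball_subset_closedBall) _)

lemma IsDoublingWith.sigmaFinite (hd : IsDoublingWith μ Cd) (o : X) : SigmaFinite μ :=
  ⟨⟨⟨fun n => ball o n, fun _ => trivial, fun _ => hd.ball_lt_top _ _, iUnion_ball_nat o⟩⟩⟩

lemma IsDoublingWith.countable_of_pairwiseDisjoint_closedBall [OpensMeasurableSpace X]
    (hd : IsDoublingWith μ Cd) {r : ℝ} (hr : 0 < r) {t : Set X}
    (ht : t.PairwiseDisjoint fun x => closedBall x r) : t.Countable := by
  rcases t.eq_empty_or_nonempty with rfl | ⟨o, -⟩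
  · exact countable_empty
  have := hd.sigmaFinite o
  have hcount := Measure.countable_meas_pos_of_disjoint_iUnion (μ := μ)
    (As := fun x : t => closedBall (x : X) r) (fun _ => isClosed_closedBall.measurableSet)
    fun x y hxy => ht x.2 y.2 (Subtype.coe_injective.ne hxy)
  have hpos : {x : t | 0 < μ (closedBall (x : X) r)} = univ :=
    eq_univ_of_forall fun x =>
      (hd.ball_pos (x : X) hr).trans_le (measure_mono ball_subset_closedBall)
  rw [hpos] at hcount
  exact countable_coe_iff.1 (countable_univ_iff.1 hcount)

lemma IsDoublingWith.secondCountableTopology [OpensMeasurableSpace X]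
    (hd : IsDoublingWith μ Cd) : SecondCountableTopology X := by
  refine Metric.secondCountable_of_almost_dense_set fun ε hε => ?_
  obtain ⟨t, -, hdisj, hcov⟩ :=
    Vitali.exists_disjoint_subfamily_covering_enlargement_closedBall
      (univ : Set X) id (fun _ => ε / 5) (ε / 5) (fun _ _ => le_rfl) 5 (by norm_num)
  refine ⟨t, hd.countable_of_pairwiseDisjoint_closedBall (by positivity) hdisj, fun x => ?_⟩
  obtain ⟨y, hy, hsub⟩ := hcov x (mem_univ x)
  refine ⟨y, hy, ?_⟩
  simpa only [mul_div_cancel₀ ε (by norm_num : (5 : ℝ) ≠ 0), id_eq, mem_closedBall] using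
    hsub (mem_closedBall_self (by positivity))

end Doubling

section Cutoff

variable {X : Type u} [PseudoMetricSpace X]

lemma exists_abs_le_of_lipschitzOnWith {u : X → ℝ} {L : ℝ≥0} {s : Set X}
    (hu : LipschitzOnWith L u s) (hs : Bornology.IsBounded s) :
    ∃ M : ℝ≥0, ∀ x ∈ s, |u x| ≤ M := by
  rcases s.eq_empty_or_nonempty with rfl | ⟨x₀, hx₀⟩
  · exact ⟨0, by simp⟩
  obtain ⟨D, hD⟩ := Metric.isBounded_iff.1 hs
  refine ⟨‖u x₀‖₊ + L * D.toNNReal, fun x hx => ?_⟩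
  calc |u x| ≤ |u x₀| + dist (u x) (u x₀) := by
        rw [Real.dist_eq]
        linarith [abs_sub_abs_le_abs_sub (u x) (u x₀)]
    _ ≤ |u x₀| + L * D.toNNReal := by
        gcongr
        exact (hu.dist_le_mul x hx x₀ hx₀).trans
          (mul_le_mul_of_nonneg_left ((hD hx hx₀).trans (Real.le_coe_toNNReal D)) L.coe_nonneg)

/-- The radial function equal to `1` on the closed ball of radius `a` about `c`, to `0` outside
the open ball of radius `b`, and affine in the distance to `c` in between. -/
def tent (c : X) (a b : ℝ) (x : X) : ℝ :=
  max 0 (min 1 ((b - dist x c) / (b - a)))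

lemma tent_nonneg (c : X) (a b : ℝ) (x : X) : 0 ≤ tent c a b x :=
  le_max_left _ _

lemma tent_le_one (c : X) (a b : ℝ) (x : X) : tent c a b x ≤ 1 :=
  max_le zero_le_one (min_le_left _ _)

lemma tent_eq_one {c x : X} {a b : ℝ} (hab : a < b) (hx : dist x c ≤ a) : tent c a b x = 1 := by
  have hquot : 1 ≤ (b - dist x c) / (b - a) := (one_le_div (sub_pos.2 hab)).2 (by linarith)
  rw [tent, min_eq_left hquot, max_eq_right zero_le_one]

lemma tent_eq_zero {c x : X} {a b : ℝ} (hab : a < b) (hx : b ≤ dist x c) : tent c a b x = 0 :=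
  max_eq_left ((min_le_right _ _).trans
    (div_nonpos_of_nonpos_of_nonneg (sub_nonpos.2 hx) (sub_pos.2 hab).le))

lemma lipschitzWith_tent (c : X) {a b : ℝ} (hab : a < b) :
    LipschitzWith (b - a)⁻¹.toNNReal (tent c a b) := by
  have hba : 0 < (b - a)⁻¹ := inv_pos.2 (sub_pos.2 hab)
  have haffine : LipschitzWith (b - a)⁻¹.toNNReal fun x => (b - dist x c) / (b - a) := by
    refine LipschitzWith.of_dist_le_mul fun x y => ?_
    rw [Real.coe_toNNReal _ hba.le, Real.dist_eq, ← sub_div, sub_sub_sub_cancel_left,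
      div_eq_inv_mul, abs_mul, abs_of_pos hba, abs_sub_comm]
    exact mul_le_mul_of_nonneg_left (abs_dist_sub_le _ _ _) hba.le
  exact (haffine.const_min 1).const_max 0

/-- `θ` is a Lipschitz cutoff function supported in `F`: it takes values in `[0, 1]` and vanishes
outside `F`. -/
structure IsCutoff (θ : X → ℝ) (F : Set X) : Prop where
  nonneg : ∀ x, 0 ≤ θ x
  le_one : ∀ x, θ x ≤ 1
  eq_zero_of_notMem : ∀ x ∉ F, θ x = 0
  exists_lipschitzWith : ∃ L : ℝ≥0, LipschitzWith L θ

lemma isCutoff_tent (c : X) {a b : ℝ} (hab : a < b) : IsCutoff (tent c a b) (closedBall c b) where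
  nonneg := tent_nonneg c a b
  le_one := tent_le_one c a b
  eq_zero_of_notMem _ hx := tent_eq_zero hab (not_le.1 (mt mem_closedBall.2 hx)).le
  exists_lipschitzWith := ⟨_, lipschitzWith_tent c hab⟩

lemma isCutoff_one_sub_tent (c : X) {a b : ℝ} (hab : a < b) :
    IsCutoff (fun x => 1 - tent c a b x) (ball c a)ᶜ where
  nonneg x := sub_nonneg.2 (tent_le_one c a b x)
  le_one x := sub_le_self 1 (tent_nonneg c a b x)
  eq_zero_of_notMem x hx := by
    rw [tent_eq_one hab (mem_ball.1 (notMem_compl_iff.1 hx)).le, sub_self]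
  exists_lipschitzWith := ⟨_, (LipschitzWith.const 1).sub (lipschitzWith_tent c hab)⟩

lemma isCutoff_one : IsCutoff (fun _ : X => (1 : ℝ)) univ where
  nonneg _ := zero_le_one
  le_one _ := le_rfl
  eq_zero_of_notMem _ hx := absurd (mem_univ _) hx
  exists_lipschitzWith := ⟨0, LipschitzWith.const 1⟩

lemma IsCutoff.abs_mul_sub_mul_le {θ u : X → ℝ} {F : Set X} (hθ : IsCutoff θ F) (x y : X) :
    |θ x * u x - θ y * u y| ≤ |u x| * |θ x - θ y| + θ y * |u x - u y| := by
  calc |θ x * u x - θ y * u y| = |u x * (θ x - θ y) + θ y * (u x - u y)| := by ring_nf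
    _ ≤ |u x| * |θ x - θ y| + |θ y| * |u x - u y| := by
        simpa only [abs_mul] using abs_add_le (u x * (θ x - θ y)) (θ y * (u x - u y))
    _ = |u x| * |θ x - θ y| + θ y * |u x - u y| := by rw [abs_of_nonneg (hθ.nonneg y)]

lemma IsCutoff.mul {θ ψ : X → ℝ} {F G : Set X} (hθ : IsCutoff θ F) (hψ : IsCutoff ψ G) :
    IsCutoff (fun x => θ x * ψ x) (F ∩ G) where
  nonneg x := mul_nonneg (hθ.nonneg x) (hψ.nonneg x)
  le_one x := mul_le_one₀ (hθ.le_one x) (hψ.nonneg x) (hψ.le_one x)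
  eq_zero_of_notMem x hx := by
    by_cases hxF : x ∈ F
    · rw [hψ.eq_zero_of_notMem x fun hxG => hx ⟨hxF, hxG⟩, mul_zero]
    · rw [hθ.eq_zero_of_notMem x hxF, zero_mul]
  exists_lipschitzWith := by
    obtain ⟨L, hL⟩ := hθ.exists_lipschitzWith
    obtain ⟨M, hM⟩ := hψ.exists_lipschitzWith
    refine ⟨L + M, LipschitzWith.of_dist_le_mul fun x y => ?_⟩
    calc |θ x * ψ x - θ y * ψ y| ≤ |ψ x| * |θ x - θ y| + θ y * |ψ x - ψ y| :=
          hθ.abs_mul_sub_mul_le x y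
      _ ≤ 1 * (L * dist x y) + 1 * (M * dist x y) := by
          gcongr
          · rw [abs_of_nonneg (hψ.nonneg x)]
            exact hψ.le_one x
          · exact hL.dist_le_mul x y
          · exact hθ.le_one y
          · exact hM.dist_le_mul x y
      _ = ↑(L + M) * dist x y := by push_cast; ring

lemma LocallyLipschitzOnSet.cutoff_mul {θ u : X → ℝ} {W F : Set X}
    (hu : LocallyLipschitzOnSet u W) (hθ : IsCutoff θ F) (hF : IsClosed F) (hFW : F ⊆ W) :
    LocallyLipschitzOnSet (fun x => θ x * u x) univ := by
  intro K hK hKb _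
  obtain ⟨L, hL⟩ := hθ.exists_lipschitzWith
  obtain ⟨M, hM⟩ := hu (K ∩ F) (hK.inter hF) (hKb.subset inter_subset_left)
    (inter_subset_right.trans hFW)
  obtain ⟨N, hN⟩ := exists_abs_le_of_lipschitzOnWith hM (hKb.subset inter_subset_left)
  have hbound : ∀ x ∈ K ∩ F, ∀ y ∈ K, |θ x * u x - θ y * u y| ≤ (N * L + M) * dist x y := by
    intro x hx y hy
    have hincr : θ y * |u x - u y| ≤ M * dist x y := by
      by_cases hyF : y ∈ F
      · exact (mul_le_of_le_one_left (abs_nonneg _) (hθ.le_one y)).trans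
          (hM.dist_le_mul x hx y ⟨hy, hyF⟩)
      · rw [hθ.eq_zero_of_notMem y hyF, zero_mul]
        positivity
    calc |θ x * u x - θ y * u y| ≤ |u x| * |θ x - θ y| + θ y * |u x - u y| :=
          hθ.abs_mul_sub_mul_le x y
      _ ≤ N * (L * dist x y) + M * dist x y := by
          gcongr
          · exact hN x hx
          · exact hL.dist_le_mul x y
      _ = (N * L + M) * dist x y := by ring
  refine ⟨N * L + M, LipschitzOnWith.of_dist_le_mul fun x hx y hy => ?_⟩
  push_cast
  rw [Real.dist_eq]
  by_cases hxF : x ∈ F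
  · exact hbound x ⟨hx, hxF⟩ y hy
  by_cases hyF : y ∈ F
  · rw [abs_sub_comm, dist_comm]
    exact hbound y ⟨hy, hyF⟩ x hx
  · simp only [hθ.eq_zero_of_notMem x hxF, hθ.eq_zero_of_notMem y hyF, zero_mul, sub_self,
      abs_zero]
    positivity

lemma IsCutoff.lipConst_mul_eq_zero {θ : X → ℝ} {F : Set X} (hθ : IsCutoff θ F)
    (hF : IsClosed F) (u : X → ℝ) {x : X} (hx : x ∉ F) :
    lipConst (fun y => θ y * u y) x = 0 := by
  have hzero : LipschitzOnWith 0 (fun y => θ y * u y) Fᶜ := by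
    refine LipschitzOnWith.of_dist_le_mul fun y hy z hz => ?_
    simp [hθ.eq_zero_of_notMem y hy, hθ.eq_zero_of_notMem z hz]
  simpa only [ENNReal.coe_zero, nonpos_iff_eq_zero] using
    lipConst_le_of_lipschitzOnWith hzero (hF.isOpen_compl.mem_nhds hx)

lemma exists_ball_cutoff (c : X) {r l : ℝ} (hr : 0 < r) (hl : 1 < l) :
    ∃ (θ : X → ℝ) (F : Set X), IsClosed F ∧ F ⊆ (closedBall c r)ᶜ ∧ IsCutoff θ F ∧
      (∀ x ∉ ball c (2 * r), θ x = 1) ∧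
      ∀ (u : X → ℝ) (x : X), lipConst (fun y => θ y * u y) x ≤ lipConst u x +
        (ball c (2 * r)).indicator (fun _ => ENNReal.ofReal (l / r)) x *
          ENNReal.ofReal |u x| := by
  -- The slope `l / r` exceeds `1 / r`, which leaves room for a margin `g` on either side.
  obtain ⟨g, hg, hgap⟩ : ∃ g > 0, 2 * r - g - (r + g) = r / l :=
    ⟨(r - r / l) / 2, half_pos (sub_pos.2 (div_lt_self hr hl)), by ring⟩
  have hab : r + g < 2 * r - g := by
    have : 0 < r / l := div_pos hr (one_pos.trans hl)
    linarith
  have hθ := isCutoff_one_sub_tent c hab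
  have hone : ∀ x, 2 * r - g ≤ dist x c → 1 - tent c (r + g) (2 * r - g) x = 1 := fun x hx => by
    rw [tent_eq_zero hab hx, sub_zero]
  refine ⟨_, _, isOpen_ball.isClosed_compl, ?_, hθ, fun x hx => hone x ?_, fun u x => ?_⟩
  · exact compl_subset_compl.2 (closedBall_subset_ball (by linarith))
  · linarith [not_lt.1 (mt mem_ball.2 hx)]
  by_cases hx : x ∈ ball c (2 * r)
  · rw [indicator_of_mem hx]
    have hlip := (LipschitzWith.const (1 : ℝ)).sub (lipschitzWith_tent c hab)
    rw [zero_add, hgap, inv_div] at hlip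
    exact lipConst_mul_le hθ.nonneg hθ.le_one hlip.lipschitzOnWith univ_mem
  · rw [indicator_of_notMem hx, zero_mul, add_zero]
    have hdist : Continuous fun y => dist y c := by fun_prop
    refine (lipConst_congr ?_).le
    filter_upwards [(hdist.tendsto x).eventually_const_lt
      (show 2 * r - g < dist x c by linarith [not_lt.1 (mt mem_ball.2 hx)])] with y hy
    rw [hone y hy.le, one_mul]

lemma exists_finset_cutoff {ι : Type*} (s : Finset ι) (c : ι → X) {r : ι → ℝ} {l : ℝ}
    (hr : ∀ i ∈ s, 0 < r i) (hl : 1 < l) :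
    ∃ (θ : X → ℝ) (F : Set X), IsClosed F ∧ F ⊆ (⋃ i ∈ s, closedBall (c i) (r i))ᶜ ∧
      IsCutoff θ F ∧ (∀ x ∉ ⋃ i ∈ s, ball (c i) (2 * r i), θ x = 1) ∧
      ∀ (u : X → ℝ) (x : X), lipConst (fun y => θ y * u y) x ≤ lipConst u x +
        (∑ i ∈ s, (ball (c i) (2 * r i)).indicator (fun _ => ENNReal.ofReal (l / r i)) x) *
          ENNReal.ofReal |u x| := by
  classical
  induction s using Finset.induction_on with
  | empty => exact ⟨_, _, isClosed_univ, by simp, isCutoff_one, by simp, by simp⟩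
  | insert j s hj ih =>
    obtain ⟨θ, F, hF, hFs, hθ, hθone, hθlip⟩ := ih fun i hi => hr i (Finset.mem_insert_of_mem hi)
    obtain ⟨ψ, G, hG, hGj, hψ, hψone, hψlip⟩ :=
      exists_ball_cutoff (c j) (hr j (Finset.mem_insert_self j s)) hl
    refine ⟨_, _, hG.inter hF, ?_, hψ.mul hθ, fun x hx => ?_, fun u x => ?_⟩
    · rw [Finset.set_biUnion_insert, compl_union]
      exact inter_subset_inter hGj hFs
    · rw [Finset.set_biUnion_insert, mem_union, not_or] at hx
      rw [hψone x hx.1, hθone x hx.2, one_mul]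
    · have hθu : ENNReal.ofReal |θ x * u x| ≤ ENNReal.ofReal |u x| := by
        rw [abs_mul, abs_of_nonneg (hθ.nonneg x)]
        exact ENNReal.ofReal_le_ofReal (mul_le_of_le_one_left (abs_nonneg _) (hθ.le_one x))
      simp only [mul_assoc]
      refine (hψlip (fun y => θ y * u y) x).trans ?_
      rw [Finset.sum_insert hj, add_mul, add_comm, add_left_comm]
      exact add_le_add (mul_le_mul_right hθu _) (hθlip u x)

end Cutoff

section Isoperimetric

lemma min_measure_le_lintegral_abs_indicator_sub {X : Type*} [MeasurableSpace X] {μ : Measure X}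
    {E B : Set X} (hE : NullMeasurableSet E μ) (hB : MeasurableSet B) (a : ℝ) :
    min (μ (E ∩ B)) (μ (Eᶜ ∩ B)) ≤
      ∫⁻ y in B, ENNReal.ofReal |E.indicator (fun _ => (1 : ℝ)) y - a| ∂μ := by
  have hE' : NullMeasurableSet E (μ.restrict B) :=
    hE.mono_ac Measure.restrict_le_self.absolutelyContinuous
  have hsplit : ∀ y, ENNReal.ofReal |E.indicator (fun _ => (1 : ℝ)) y - a| =
      E.indicator (fun _ => ENNReal.ofReal |1 - a|) y +
        Eᶜ.indicator (fun _ => ENNReal.ofReal |a|) y := fun y => by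
    by_cases hy : y ∈ E <;> simp [hy]
  have hone : 1 ≤ ENNReal.ofReal |1 - a| + ENNReal.ofReal |a| := by
    rw [← ENNReal.ofReal_add (abs_nonneg _) (abs_nonneg _), ENNReal.one_le_ofReal]
    linarith [le_abs_self (1 - a), le_abs_self a]
  calc min (μ (E ∩ B)) (μ (Eᶜ ∩ B))
      ≤ (ENNReal.ofReal |1 - a| + ENNReal.ofReal |a|) * min (μ (E ∩ B)) (μ (Eᶜ ∩ B)) :=
        le_mul_of_one_le_left' hone
    _ ≤ ENNReal.ofReal |1 - a| * μ (E ∩ B) + ENNReal.ofReal |a| * μ (Eᶜ ∩ B) := by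
        rw [add_mul]
        gcongr
        · exact min_le_left _ _
        · exact min_le_right _ _
    _ = ∫⁻ y in B, ENNReal.ofReal |E.indicator (fun _ => (1 : ℝ)) y - a| ∂μ := by
        simp_rw [hsplit]
        rw [lintegral_add_left' (aemeasurable_const.indicator₀ hE'),
          lintegral_indicator_const₀ hE', lintegral_indicator_const₀ hE'.compl,
          Measure.restrict_apply' hB, Measure.restrict_apply' hB]

/-- The relative isoperimetric inequality for the set `E`, with the perimeter taken in the ball of
twice the radius. It is all that is needed of the Poincaré inequality. -/
def RelIsoperimetric {X : Type u} [PseudoMetricSpace X] [MeasurableSpace X] (μ : Measure X)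
    (K : ℝ≥0) (E : Set X) : Prop :=
  ∀ (x : X) (s : ℝ), 0 < s → min (μ (E ∩ ball x s)) (μ (Eᶜ ∩ ball x s)) ≤
    K * ENNReal.ofReal s * perimeterOn μ E (ball x (2 * s))

lemma RelIsoperimetric.compl {X : Type u} [PseudoMetricSpace X] [MeasurableSpace X]
    {μ : Measure X} {K : ℝ≥0} {E : Set X} (hE : RelIsoperimetric μ K E) :
    RelIsoperimetric μ K Eᶜ := by
  intro x s hs
  rw [compl_compl, min_comm, perimeterOn_compl]
  exact hE x s hs

variable {X : Type u} [MetricSpace X] [MeasurableSpace X] [BorelSpace X] {μ : Measure X}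
  {Cd : ℝ≥0} {CP : ℝ}

lemma SupportsPoincare.exists_lintegral_abs_sub_le (hP : SupportsPoincare μ CP)
    (hd : IsDoublingWith μ Cd) {v : X → ℝ} (hv : LocallyLipschitzOnSet v univ) (x : X) {s : ℝ}
    (hs : 0 < s) : ∃ a : ℝ, ∫⁻ y in ball x s, ENNReal.ofReal |v y - a| ∂μ ≤
      CP.toNNReal * ENNReal.ofReal s * ∫⁻ y in ball x s, lipConst v y ∂μ := by
  have hvc := hv.continuous
  have hlip : Measurable fun y => (lipConst v y).toReal := (measurable_lipConst hvc).ennreal_toReal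
  have hpos : 0 < μ.real (ball x s) :=
    ENNReal.toReal_pos (hd.ball_pos x hs).ne' (hd.ball_lt_top x s).ne
  have hmean := hP v hv _ (fun y => ENNReal.toReal_nonneg) hlip hv.isUpperGradientOf_lipConst x s hs
  set a := ⨍ z in ball x s, v z ∂μ
  refine ⟨a, ?_⟩
  have hosc : IntegrableOn (fun y => |v y - a|) (ball x s) μ := by
    obtain ⟨L, hL⟩ := hv.exists_lipschitzOnWith_of_isBounded (isBounded_ball (x := x) (r := s))
    obtain ⟨M, hM⟩ := exists_abs_le_of_lipschitzOnWith hL isBounded_ball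
    refine IntegrableOn.of_bound (hd.ball_lt_top x s) (by fun_prop) (M + |a|) ?_
    refine (ae_restrict_iff' measurableSet_ball).2 (Eventually.of_forall fun y hy => ?_)
    rw [Real.norm_eq_abs, abs_abs]
    exact (abs_sub _ _).trans (add_le_add_left (hM y hy) _)
  have hgrad : IntegrableOn (fun y => (lipConst v y).toReal) (ball x s) μ := by
    obtain ⟨L, hL⟩ := hv.exists_lipConst_le (isBounded_ball (x := x) (r := s))
    refine IntegrableOn.of_bound (hd.ball_lt_top x s) hlip.aestronglyMeasurable L ?_
    refine (ae_restrict_iff' measurableSet_ball).2 (Eventually.of_forall fun y hy => ?_)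
    rw [Real.norm_eq_abs, ENNReal.abs_toReal]
    exact ENNReal.toReal_le_coe_of_le_coe (hL y hy)
  rw [setAverage_eq, setAverage_eq, smul_eq_mul, smul_eq_mul, mul_left_comm,
    mul_le_mul_iff_right₀ (inv_pos.2 hpos)] at hmean
  calc ∫⁻ y in ball x s, ENNReal.ofReal |v y - a| ∂μ
      = ENNReal.ofReal (∫ y in ball x s, |v y - a| ∂μ) :=
        (ofReal_integral_eq_lintegral_ofReal hosc (Eventually.of_forall fun y => abs_nonneg _)).symm
    _ ≤ ENNReal.ofReal (CP * s * ∫ y in ball x s, (lipConst v y).toReal ∂μ) :=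
        ENNReal.ofReal_le_ofReal hmean
    _ = CP.toNNReal * ENNReal.ofReal s *
          ∫⁻ y in ball x s, ENNReal.ofReal (lipConst v y).toReal ∂μ := by
        rw [ENNReal.ofReal_mul' (integral_nonneg fun y => ENNReal.toReal_nonneg),
          ENNReal.ofReal_mul' hs.le, ofReal_integral_eq_lintegral_ofReal hgrad
            (Eventually.of_forall fun y => ENNReal.toReal_nonneg)]
        rfl
    _ ≤ CP.toNNReal * ENNReal.ofReal s * ∫⁻ y in ball x s, lipConst v y ∂μ := by
        gcongr
        exact ENNReal.ofReal_toReal_le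

lemma SupportsPoincare.min_measure_le_add (hP : SupportsPoincare μ CP)
    (hd : IsDoublingWith μ Cd) {E : Set X} (hE : NullMeasurableSet E μ) {v : X → ℝ}
    (hv : LocallyLipschitzOnSet v univ) (x : X) {s : ℝ} (hs : 0 < s) :
    min (μ (E ∩ ball x s)) (μ (Eᶜ ∩ ball x s)) ≤
      ∫⁻ y in ball x s, ENNReal.ofReal |v y - E.indicator (fun _ => (1 : ℝ)) y| ∂μ +
        CP.toNNReal * ENNReal.ofReal s * ∫⁻ y in ball x s, lipConst v y ∂μ := by
  obtain ⟨a, ha⟩ := hP.exists_lintegral_abs_sub_le hd hv x hs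
  have hmeas : Measurable fun y => ENNReal.ofReal |v y - a| := by
    have := hv.continuous
    exact (ENNReal.continuous_ofReal.comp (by fun_prop)).measurable
  refine (min_measure_le_lintegral_abs_indicator_sub hE measurableSet_ball a).trans ?_
  refine le_trans ?_ (add_le_add_right ha _)
  rw [← lintegral_add_right _ hmeas]
  refine lintegral_mono fun y => ?_
  rw [← ENNReal.ofReal_add (abs_nonneg _) (abs_nonneg _), abs_sub_comm (v y)]
  exact ENNReal.ofReal_le_ofReal (abs_sub_le _ _ _)

lemma SupportsPoincare.min_measure_le_add_of_locallyLipschitzOnSet_ball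
    (hP : SupportsPoincare μ CP) (hd : IsDoublingWith μ Cd) {E : Set X}
    (hE : NullMeasurableSet E μ) {x : X} {s : ℝ} (hs : 0 < s) {u : X → ℝ}
    (hu : LocallyLipschitzOnSet u (ball x (2 * s))) :
    min (μ (E ∩ ball x s)) (μ (Eᶜ ∩ ball x s)) ≤
      ∫⁻ y in closedBall x s, ENNReal.ofReal |u y - E.indicator (fun _ => (1 : ℝ)) y| ∂μ +
        CP.toNNReal * ENNReal.ofReal s * ∫⁻ y in ball x (2 * s), lipConst u y ∂μ := by
  have hs' : s < 3 / 2 * s := by linarith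
  have hv : LocallyLipschitzOnSet (fun y => tent x s (3 / 2 * s) y * u y) univ :=
    hu.cutoff_mul (isCutoff_tent x hs') isClosed_closedBall (closedBall_subset_ball (by linarith))
  have hvu : ∀ y ∈ ball x s, tent x s (3 / 2 * s) y * u y = u y := fun y hy => by
    rw [tent_eq_one hs' (mem_ball.1 hy).le, one_mul]
  have hlip : ∀ y ∈ ball x s, lipConst (fun y => tent x s (3 / 2 * s) y * u y) y = lipConst u y :=
    fun y hy => lipConst_congr (eventually_of_mem (isOpen_ball.mem_nhds hy) hvu)
  refine (hP.min_measure_le_add hd hE hv x hs).trans (add_le_add ?_ ?_)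
  · refine (setLIntegral_congr_fun measurableSet_ball fun y hy => ?_).trans_le
      (lintegral_mono_set ball_subset_closedBall)
    simp only [hvu y hy]
  · rw [setLIntegral_congr_fun measurableSet_ball hlip]
    gcongr
    linarith

lemma SupportsPoincare.relIsoperimetric (hP : SupportsPoincare μ CP) (hd : IsDoublingWith μ Cd)
    {E : Set X} (hE : NullMeasurableSet E μ) (hfin : perimeterOn μ E univ ≠ ⊤) :
    RelIsoperimetric μ CP.toNNReal E := by
  intro x s hs
  set A : ℝ≥0∞ := CP.toNNReal * ENNReal.ofReal s
  have hA : A ≠ ⊤ := ENNReal.mul_ne_top ENNReal.coe_ne_top ENNReal.ofReal_ne_top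
  refine ENNReal.le_of_forall_pos_le_add fun ε hε _ => ?_
  have hε₂ : (ε : ℝ≥0∞) / 2 ≠ 0 := (ENNReal.half_pos (ENNReal.coe_pos.2 hε).ne').ne'
  obtain ⟨u, hu, hlip, hdist⟩ := exists_lintegral_lipConst_le_totVarOn_add
    (ne_top_of_le_ne_top hfin (totVarOn_mono _ (subset_univ (ball x (2 * s)))))
    isClosed_closedBall isBounded_closedBall
    (closedBall_subset_ball (by linarith : s < 2 * s)) (ENNReal.div_pos hε₂ hA).ne' hε₂
  calc min (μ (E ∩ ball x s)) (μ (Eᶜ ∩ ball x s))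
      ≤ ε / 2 + A * (perimeterOn μ E (ball x (2 * s)) + ε / 2 / A) :=
        (hP.min_measure_le_add_of_locallyLipschitzOnSet_ball hd hE hs hu).trans
          (add_le_add hdist (mul_le_mul_right hlip A))
    _ ≤ ε / 2 + (A * perimeterOn μ E (ball x (2 * s)) + ε / 2) := by
        rw [mul_add]
        gcongr
        exact ENNReal.mul_div_le
    _ = A * perimeterOn μ E (ball x (2 * s)) + ε := by
        rw [add_left_comm, ENNReal.add_halves]

end Isoperimetric

section Cut

lemma sum_indicator_const_le {α ι : Type*} {s : Finset ι} {A : ι → Set α} {B : Set α}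
    (hAB : ∀ i ∈ s, A i ⊆ B) (b : ι → ℝ≥0∞) (x : α) :
    ∑ i ∈ s, (A i).indicator (fun _ => b i) x ≤ B.indicator (fun _ => ∑ i ∈ s, b i) x := by
  by_cases hx : x ∈ B
  · rw [indicator_of_mem hx]
    exact Finset.sum_le_sum fun i _ => indicator_le_self _ _ x
  · rw [indicator_of_notMem hx]
    exact (Finset.sum_eq_zero fun i hi => indicator_of_notMem (fun h => hx (hAB i hi h)) _).le

lemma setLIntegral_sum_indicator_const {α ι : Type*} [MeasurableSpace α] {μ : Measure α}
    (s : Finset ι) {A : ι → Set α}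
    (hA : ∀ i, MeasurableSet (A i)) (b : ι → ℝ≥0∞) (E : Set α) :
    ∫⁻ x in E, ∑ i ∈ s, (A i).indicator (fun _ => b i) x ∂μ = ∑ i ∈ s, b i * μ (E ∩ A i) := by
  rw [lintegral_finsetSum _ fun i _ => measurable_const.indicator (hA i)]
  refine Finset.sum_congr rfl fun i _ => ?_
  rw [lintegral_indicator_const (hA i), Measure.restrict_apply (hA i), inter_comm]

variable {X : Type u} [PseudoMetricSpace X]

lemma IsCutoff.ofReal_abs_mul_sub_indicator_le {E F U : Set X} {θ : X → ℝ} (hθ : IsCutoff θ F)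
    (hone : ∀ x ∉ U, θ x = 1) (u : X → ℝ) (x : X) :
    ENNReal.ofReal |θ x * u x - E.indicator (fun _ => (1 : ℝ)) x| ≤
      (E ∩ U).indicator (fun _ => 1) x +
        F.indicator (fun y => ENNReal.ofReal |u y - E.indicator (fun _ => (1 : ℝ)) y|) x := by
  set χ : X → ℝ := E.indicator fun _ => (1 : ℝ)
  have hχ : 0 ≤ (1 - θ x) * χ x :=
    mul_nonneg (sub_nonneg.2 (hθ.le_one x)) (indicator_nonneg (fun _ _ => zero_le_one) x)
  have hsplit : |θ x * u x - χ x| ≤ (1 - θ x) * χ x + θ x * |u x - χ x| := by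
    rw [← abs_of_nonneg hχ, ← abs_of_nonneg (hθ.nonneg x), ← abs_mul, abs_of_nonneg (hθ.nonneg x),
      ← abs_neg ((1 - θ x) * χ x)]
    exact (congrArg _ (by ring)).trans_le (abs_add_le _ _)
  refine (ENNReal.ofReal_le_ofReal hsplit).trans ?_
  rw [ENNReal.ofReal_add hχ (mul_nonneg (hθ.nonneg x) (abs_nonneg _))]
  refine add_le_add ?_ ?_
  · by_cases hx : x ∈ E ∩ U
    · simp [χ, hx, hx.1, hθ.nonneg x]
    · by_cases hxE : x ∈ E
      · simp [hone x fun hxU => hx ⟨hxE, hxU⟩]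
      · simp [χ, hxE]
  · by_cases hx : x ∈ F
    · rw [indicator_of_mem hx]
      exact ENNReal.ofReal_le_ofReal (mul_le_of_le_one_left (abs_nonneg _) (hθ.le_one x))
    · simp [hθ.eq_zero_of_notMem x hx]

lemma exists_forall_ball_subset_closedBall {ι : Type*} (s : Finset ι) (c : ι → X) (r : ι → ℝ)
    (x₀ : X) (R : ℝ) : ∃ R', R ≤ R' ∧ ∀ i ∈ s, ball (c i) (r i) ⊆ closedBall x₀ R' := by
  obtain ⟨R', hRR', hR'⟩ := ((Bornology.isBounded_biUnion s.finite_toSet).2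
    fun i _ => isBounded_ball (x := c i) (r := r i)).subset_closedBall_lt R x₀
  exact ⟨R', hRR'.le, iUnion₂_subset_iff.1 hR'⟩

variable [MeasurableSpace X] {μ : Measure X}

lemma IsCutoff.setLIntegral_abs_mul_sub_indicator_le {E F U : Set X} {θ : X → ℝ}
    (hθ : IsCutoff θ F) (hE : NullMeasurableSet E μ) (hF : MeasurableSet F)
    (hU : MeasurableSet U) (hone : ∀ x ∉ U, θ x = 1) (u : X → ℝ) (B : Set X) :
    ∫⁻ x in B, ENNReal.ofReal |θ x * u x - E.indicator (fun _ => (1 : ℝ)) x| ∂μ ≤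
      μ (E ∩ U) + ∫⁻ x in F ∩ B, ENNReal.ofReal |u x - E.indicator (fun _ => (1 : ℝ)) x| ∂μ := by
  have hEU : NullMeasurableSet (E ∩ U) μ := hE.inter hU.nullMeasurableSet
  refine (lintegral_mono (hθ.ofReal_abs_mul_sub_indicator_le hone u)).trans ?_
  rw [lintegral_add_left' (aemeasurable_const.indicator₀ hEU).restrict, setLIntegral_indicator hF]
  gcongr
  refine (setLIntegral_le_lintegral _ _).trans_eq ?_
  rw [lintegral_indicator_const₀ hEU, one_mul]

lemma IsCutoff.lintegral_lipConst_mul_le {E F B : Set X} {θ u : X → ℝ} {a : X → ℝ≥0∞} {G : ℝ≥0∞}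
    (hθ : IsCutoff θ F) (hE : NullMeasurableSet E μ) (hF : IsClosed F) (hB : MeasurableSet B)
    (hu : AEMeasurable u (μ.restrict F)) (ha : Measurable a)
    (haG : ∀ x, a x ≤ B.indicator (fun _ => G) x)
    (hlip : ∀ x, lipConst (fun y => θ y * u y) x ≤ lipConst u x + a x * ENNReal.ofReal |u x|) :
    ∫⁻ x, lipConst (fun y => θ y * u y) x ∂μ ≤ ∫⁻ x in F, lipConst u x ∂μ +
      (∫⁻ x in E, a x ∂μ +
        G * ∫⁻ x in F ∩ B, ENNReal.ofReal |u x - E.indicator (fun _ => (1 : ℝ)) x| ∂μ) := by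
  set χ : X → ℝ := E.indicator fun _ => (1 : ℝ) with hχ
  have hsupp : Function.support (lipConst fun y => θ y * u y) ⊆ F := fun x hx => by
    by_contra hxF
    exact hx (hθ.lipConst_mul_eq_zero hF u hxF)
  have hdist : AEMeasurable (fun x => ENNReal.ofReal |u x - χ x|) (μ.restrict F) :=
    ((hu.sub (aemeasurable_const.indicator₀ hE).restrict).norm).ennreal_ofReal
  have hpt : ∀ x, lipConst (fun y => θ y * u y) x ≤ lipConst u x +
      (E.indicator a x + B.indicator (fun x => G * ENNReal.ofReal |u x - χ x|) x) := by
    intro x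
    have htri : ENNReal.ofReal |u x| ≤ ENNReal.ofReal (χ x) + ENNReal.ofReal |u x - χ x| := by
      have hχx : 0 ≤ χ x := indicator_nonneg (fun _ _ => zero_le_one) x
      rw [← ENNReal.ofReal_add hχx (abs_nonneg _)]
      refine ENNReal.ofReal_le_ofReal ?_
      linarith [abs_sub_abs_le_abs_sub (u x) (χ x), abs_of_nonneg hχx]
    refine (hlip x).trans (add_le_add_right ((mul_le_mul_right htri _).trans ?_) _)
    rw [mul_add]
    refine add_le_add ?_ ?_
    · by_cases hx : x ∈ E <;> simp [hχ, hx]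
    · refine (mul_le_mul_left (haG x) _).trans_eq ?_
      by_cases hx : x ∈ B <;> simp [hx]
  calc ∫⁻ x, lipConst (fun y => θ y * u y) x ∂μ
      = ∫⁻ x in F, lipConst (fun y => θ y * u y) x ∂μ :=
        (setLIntegral_eq_of_support_subset hsupp).symm
    _ ≤ ∫⁻ x in F, lipConst u x ∂μ + (∫⁻ x in F, E.indicator a x ∂μ +
          ∫⁻ x in F, B.indicator (fun x => G * ENNReal.ofReal |u x - χ x|) x ∂μ) := by
        have hEa : AEMeasurable (E.indicator a) (μ.restrict F) :=
          (ha.aemeasurable.indicator₀ hE).restrict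
        refine (lintegral_mono hpt).trans_eq ?_
        rw [← lintegral_add_left' hEa]
        exact lintegral_add_right' _ (hEa.add ((hdist.const_mul G).indicator hB))
    _ ≤ ∫⁻ x in F, lipConst u x ∂μ +
          (∫⁻ x in E, a x ∂μ + G * ∫⁻ x in F ∩ B, ENNReal.ofReal |u x - χ x| ∂μ) := by
        rw [setLIntegral_indicator hB, inter_comm B, lintegral_const_mul'' _
          (hdist.mono_set inter_subset_left), ← lintegral_indicator₀ hE]
        gcongr
        exact Measure.restrict_le_self

lemma exists_locallyLipschitz_cut [BorelSpace X] {E : Set X} (hE : NullMeasurableSet E μ)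
    {ι : Type*} (s : Finset ι) (c : ι → X) {r : ι → ℝ} {l : ℝ} (hr : ∀ i ∈ s, 0 < r i) (hl : 1 < l)
    (hfin : perimeterOn μ E (⋃ i ∈ s, closedBall (c i) (r i))ᶜ ≠ ⊤) {ε : ℝ≥0∞} (hε : ε ≠ 0)
    (x₀ : X) (R : ℝ) :
    ∃ v : X → ℝ, LocallyLipschitzOnSet v univ ∧
      ∫⁻ x, lipConst v x ∂μ ≤ perimeterOn μ E (⋃ i ∈ s, closedBall (c i) (r i))ᶜ +
        ∑ i ∈ s, ENNReal.ofReal (l / r i) * μ (E ∩ ball (c i) (2 * r i)) + ε ∧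
      ∫⁻ x in closedBall x₀ R, ENNReal.ofReal |v x - E.indicator (fun _ => (1 : ℝ)) x| ∂μ ≤
        ∑ i ∈ s, μ (E ∩ ball (c i) (2 * r i)) + ε := by
  set W := (⋃ i ∈ s, closedBall (c i) (r i))ᶜ
  set G : ℝ≥0∞ := ∑ i ∈ s, ENNReal.ofReal (l / r i)
  obtain ⟨θ, F, hF, hFW, hθ, hone, hlip⟩ := exists_finset_cutoff s c hr hl
  obtain ⟨R', hRR', hball⟩ :=
    exists_forall_ball_subset_closedBall s c (fun i => 2 * r i) x₀ R
  have hη : min ε (ε / 2 / G) ≠ 0 := by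
    have hG : G ≠ ⊤ := ENNReal.sum_ne_top.2 fun _ _ => ENNReal.ofReal_ne_top
    exact (lt_min hε.bot_lt (ENNReal.div_pos (ENNReal.half_pos hε).ne' hG)).ne'
  obtain ⟨u, hu, huW, huK⟩ := exists_lintegral_lipConst_le_totVarOn_add hfin
    (hF.inter isClosed_closedBall) (isBounded_closedBall.subset inter_subset_right)
    (inter_subset_left.trans hFW) (ENNReal.half_pos hε).ne' hη
  have hW : IsOpen W :=
    (s.finite_toSet.isClosed_biUnion fun _ _ => isClosed_closedBall).isOpen_compl
  refine ⟨fun x => θ x * u x, hu.cutoff_mul hθ hF hFW, ?_, ?_⟩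
  · calc ∫⁻ x, lipConst (fun y => θ y * u y) x ∂μ
        ≤ ∫⁻ x in F, lipConst u x ∂μ +
            (∑ i ∈ s, ENNReal.ofReal (l / r i) * μ (E ∩ ball (c i) (2 * r i)) +
              G * min ε (ε / 2 / G)) := by
          refine (hθ.lintegral_lipConst_mul_le hE hF measurableSet_closedBall
            (((hu.continuousOn hW).mono hFW).aemeasurable hF.measurableSet)
            (Finset.measurable_fun_sum _ fun i _ => measurable_const.indicator measurableSet_ball)
            (sum_indicator_const_le hball _) (hlip u)).trans ?_
          rw [setLIntegral_sum_indicator_const s fun _ => measurableSet_ball]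
          gcongr
      _ ≤ (perimeterOn μ E W + ε / 2) +
            (∑ i ∈ s, ENNReal.ofReal (l / r i) * μ (E ∩ ball (c i) (2 * r i)) + ε / 2) := by
          gcongr
          · exact (lintegral_mono_set hFW).trans huW
          · exact (mul_le_mul_right (min_le_right _ _) _).trans ENNReal.mul_div_le
      _ = _ := by rw [add_add_add_comm, ENNReal.add_halves]
  · refine (hθ.setLIntegral_abs_mul_sub_indicator_le hE hF.measurableSet
      (s.measurableSet_biUnion fun _ _ => measurableSet_ball) hone u _).trans ?_
    gcongr
    · rw [inter_iUnion₂]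
      exact measure_biUnion_finset_le _ _
    · refine (lintegral_mono_set ?_).trans (huK.trans (min_le_left _ _))
      exact inter_subset_inter_right _ (closedBall_subset_closedBall hRR')

end Cut

section Hausdorff

variable {X : Type u} [PseudoMetricSpace X] [MeasurableSpace X] {μ : Measure X}

-- A ball of nonpositive radius is empty and `0 / 0 = 0` in `ℝ≥0∞`.
lemma codimOneH_eq_iSup_iInf_tsum (A : Set X) :
    codimOneH μ A = ⨆ (δ : ℝ) (_ : 0 < δ), ⨅ (c : ℕ → X) (r : ℕ → ℝ) (_ : ∀ i, r i ≤ δ)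
      (_ : A ⊆ ⋃ i, ball (c i) (r i)), ∑' i, μ (ball (c i) (r i)) / ENNReal.ofReal (r i) := by
  have hterm : ∀ (c : X) (r : ℝ), (if 0 < r then μ (ball c r) / ENNReal.ofReal r else 0) =
      μ (ball c r) / ENNReal.ofReal r := fun c r => by
    split_ifs with hr
    · rfl
    · simp [ball_eq_empty.2 (not_lt.1 hr)]
  simp only [codimOneH, hterm]

lemma codimOneH_mono {A B : Set X} (h : A ⊆ B) : codimOneH μ A ≤ codimOneH μ B :=
  iSup₂_mono fun _ _ => iInf₂_mono fun _ _ => iInf_mono fun _ =>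
    iInf_mono' fun hB => ⟨h.trans hB, le_rfl⟩

lemma codimOneH_mono_null {A B : Set X} (h : A ⊆ B) (hB : codimOneH μ B = 0) :
    codimOneH μ A = 0 :=
  le_antisymm ((codimOneH_mono h).trans_eq hB) bot_le

lemma codimOneH_eq_zero_iff {A : Set X} : codimOneH μ A = 0 ↔ ∀ δ : ℝ, 0 < δ → ∀ ε : ℝ≥0∞, ε ≠ 0 →
    ∃ (c : ℕ → X) (r : ℕ → ℝ), (∀ i, r i ≤ δ) ∧ (A ⊆ ⋃ i, ball (c i) (r i)) ∧
      ∑' i, μ (ball (c i) (r i)) / ENNReal.ofReal (r i) < ε := by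
  simp only [codimOneH_eq_iSup_iInf_tsum, ENNReal.iSup_eq_zero]
  refine forall₂_congr fun δ _ => ⟨fun h ε hε => ?_, fun h => ?_⟩
  · simpa only [iInf_lt_iff, exists_prop] using h.trans_lt hε.bot_lt
  · refine le_antisymm (le_of_forall_gt fun ε hε => ?_) bot_le
    simpa only [iInf_lt_iff, exists_prop] using h ε hε.ne'

lemma exists_nat_cover_tsum_eq [Nonempty X] {ι : Type*} [Countable ι] {A : Set X} {δ : ℝ}
    (hδ : 0 < δ) {c : ι → X} {r : ι → ℝ} (hr : ∀ i, r i ≤ δ) (hA : A ⊆ ⋃ i, ball (c i) (r i)) :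
    ∃ (c' : ℕ → X) (r' : ℕ → ℝ), (∀ i, r' i ≤ δ) ∧ (A ⊆ ⋃ i, ball (c' i) (r' i)) ∧
      ∑' i, μ (ball (c' i) (r' i)) / ENNReal.ofReal (r' i) =
        ∑' i, μ (ball (c i) (r i)) / ENNReal.ofReal (r i) := by
  obtain ⟨e, he⟩ := exists_injective_nat ι
  refine ⟨Function.extend e c fun _ => Classical.arbitrary X, Function.extend e r fun _ => 0,
    fun n => ?_, hA.trans (iUnion_subset fun i => ?_), ?_⟩
  · by_cases hn : ∃ i, e i = n
    · obtain ⟨i, rfl⟩ := hn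
      exact (he.extend_apply r _ i).trans_le (hr i)
    · exact (Function.extend_apply' r (fun _ => (0 : ℝ)) n hn).trans_le hδ.le
  · refine subset_iUnion_of_subset (e i) ?_
    rw [he.extend_apply, he.extend_apply]
  · rw [← he.tsum_eq fun n hn => ?_]
    · simp only [he.extend_apply]
    · by_contra h
      simp [Function.extend_apply' r _ n h] at hn

lemma codimOneH_iUnion_eq_zero [Nonempty X] {ι : Type*} [Countable ι] {A : ι → Set X}
    (h : ∀ n, codimOneH μ (A n) = 0) : codimOneH μ (⋃ n, A n) = 0 := by
  rw [codimOneH_eq_zero_iff]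
  intro δ hδ ε hε
  obtain ⟨η, hη, hsum⟩ := ENNReal.exists_pos_sum_of_countable hε ι
  choose c r hr hA hs using fun n => codimOneH_eq_zero_iff.1 (h n) δ hδ (η n)
    (ENNReal.coe_pos.2 (hη n)).ne'
  obtain ⟨c', r', hr', hA', htsum⟩ := exists_nat_cover_tsum_eq (μ := μ) hδ (A := ⋃ n, A n)
    (c := fun p : ι × ℕ => c p.1 p.2) (r := fun p => r p.1 p.2) (fun p => hr _ _)
    ((iUnion_mono hA).trans_eq (iUnion_prod' fun p : ι × ℕ => ball (c p.1 p.2) (r p.1 p.2)).symm)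
  refine ⟨c', r', hr', hA', ?_⟩
  rw [htsum, ENNReal.tsum_prod (f := fun n i => μ (ball (c n i) (r n i)) / ENNReal.ofReal (r n i))]
  exact (ENNReal.tsum_le_tsum fun n => (hs n).le).trans_lt hsum

lemma codimOneH_union_eq_zero [Nonempty X] {A B : Set X} (hA : codimOneH μ A = 0)
    (hB : codimOneH μ B = 0) : codimOneH μ (A ∪ B) = 0 := by
  rw [union_eq_iUnion]
  exact codimOneH_iUnion_eq_zero (Bool.rec hB hA)

end Hausdorff

section NullSet

variable {X : Type u} [PseudoMetricSpace X] [MeasurableSpace X] {μ : Measure X}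

lemma measure_inter_ball_le_of_gain {E : Set X} {x : X} {r l δ : ℝ} {p : ℝ≥0∞} (hr : 0 < r)
    (hrδ : r ≤ δ) (hl : 1 < l) (h : ENNReal.ofReal (l / r) * μ (E ∩ ball x (2 * r)) ≤ p) :
    μ (E ∩ ball x (2 * r)) ≤ ENNReal.ofReal δ * p := by
  have hl0 : 0 < l := one_pos.trans hl
  calc μ (E ∩ ball x (2 * r))
      = ENNReal.ofReal (r / l) * (ENNReal.ofReal (l / r) * μ (E ∩ ball x (2 * r))) := by
        rw [← mul_assoc, ← ENNReal.ofReal_mul (by positivity), div_mul_div_cancel₀ hl0.ne',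
          div_self hr.ne', ENNReal.ofReal_one, one_mul]
    _ ≤ ENNReal.ofReal δ * p :=
        mul_le_mul' (ENNReal.ofReal_le_ofReal ((div_le_self hr.le hl.le).trans hrδ)) h

variable [BorelSpace X]

lemma perimeterOn_compl_biUnion_add_sum_le (E : Set X) {ι : Type*} (s : Finset ι) {c : ι → X}
    {r : ι → ℝ} (hdisj : (s : Set ι).PairwiseDisjoint fun i => closedBall (c i) (r i)) :
    perimeterOn μ E (⋃ i ∈ s, closedBall (c i) (r i))ᶜ +
      ∑ i ∈ s, perimeterOn μ E (ball (c i) (r i)) ≤ perimeterOn μ E univ := by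
  have hdisj' : (s : Set ι).PairwiseDisjoint fun i => ball (c i) (r i) :=
    hdisj.mono fun i => ball_subset_closedBall
  refine (add_le_add_right (sum_totVarOn_le _ s (fun _ _ => isOpen_ball) hdisj') _).trans ?_
  refine (totVarOn_add_le _ (isOpen_biUnion fun _ _ => isOpen_ball) ?_).trans
    (totVarOn_mono _ (subset_univ _))
  exact disjoint_compl_left.mono_right (iUnion₂_mono fun _ _ => ball_subset_closedBall)

lemma exists_locallyLipschitz_of_disjoint {E : Set X} (hE : NullMeasurableSet E μ)
    (hfin : perimeterOn μ E univ ≠ ⊤) {ι : Type*} (s : Finset ι) (c : ι → X) {r : ι → ℝ}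
    {l δ : ℝ} {t : ℝ≥0∞} (hr : ∀ i ∈ s, 0 < r i) (hrδ : ∀ i ∈ s, r i ≤ δ) (hl : 1 < l)
    (ht : t ≤ 1) (hdisj : (s : Set ι).PairwiseDisjoint fun i => closedBall (c i) (r i))
    (h : ∀ i ∈ s, ENNReal.ofReal (l / r i) * μ (E ∩ ball (c i) (2 * r i)) ≤
      t * perimeterOn μ E (ball (c i) (r i)))
    {ε : ℝ≥0∞} (hε : ε ≠ 0) (x₀ : X) (R : ℝ) :
    ∃ v : X → ℝ, LocallyLipschitzOnSet v univ ∧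
      ∫⁻ x, lipConst v x ∂μ + (1 - t) * ∑ i ∈ s, perimeterOn μ E (ball (c i) (r i)) ≤
        perimeterOn μ E univ + ε ∧
      ∫⁻ x in closedBall x₀ R, ENNReal.ofReal |v x - E.indicator (fun _ => (1 : ℝ)) x| ∂μ ≤
        ENNReal.ofReal δ * perimeterOn μ E univ + ε := by
  set W := (⋃ i ∈ s, closedBall (c i) (r i))ᶜ
  set S := ∑ i ∈ s, perimeterOn μ E (ball (c i) (r i))
  have hWS : perimeterOn μ E W + S ≤ perimeterOn μ E univ :=
    perimeterOn_compl_biUnion_add_sum_le E s hdisj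
  obtain ⟨v, hv, hlip, hdist⟩ := exists_locallyLipschitz_cut hE s c hr hl
    (ne_top_of_le_ne_top hfin (totVarOn_mono _ (subset_univ _))) hε x₀ R
  refine ⟨v, hv, ?_, hdist.trans (add_le_add_left ?_ _)⟩
  · have hcost : ∑ i ∈ s, ENNReal.ofReal (l / r i) * μ (E ∩ ball (c i) (2 * r i)) ≤ t * S :=
      (Finset.sum_le_sum h).trans_eq (Finset.mul_sum _ _ _).symm
    calc ∫⁻ x, lipConst v x ∂μ + (1 - t) * S
        ≤ perimeterOn μ E W + t * S + ε + (1 - t) * S := by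
          gcongr
          exact hlip.trans (by gcongr)
      _ = perimeterOn μ E W + (t + (1 - t)) * S + ε := by ring
      _ ≤ perimeterOn μ E univ + ε := by
          rw [add_tsub_cancel_of_le ht, one_mul]
          gcongr
  · calc ∑ i ∈ s, μ (E ∩ ball (c i) (2 * r i))
        ≤ ∑ i ∈ s, ENNReal.ofReal δ * perimeterOn μ E (ball (c i) (r i)) :=
          Finset.sum_le_sum fun i hi => measure_inter_ball_le_of_gain (hr i hi) (hrδ i hi) hl
            ((h i hi).trans (mul_le_of_le_one_left' ht))
      _ = ENNReal.ofReal δ * S := (Finset.mul_sum _ _ _).symm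
      _ ≤ ENNReal.ofReal δ * perimeterOn μ E univ := by
          gcongr
          exact le_add_self.trans hWS

variable {Cd : ℝ≥0}

lemma IsDoublingWith.exists_countable_pairwiseDisjoint_cover (hd : IsDoublingWith μ Cd)
    {A : Set X} {r : X → ℝ} {δ : ℝ} (hr : ∀ x ∈ A, 0 < r x) (hrδ : ∀ x ∈ A, r x ≤ δ) :
    ∃ u ⊆ A, u.Countable ∧ (u.PairwiseDisjoint fun x => closedBall x (r x)) ∧
      A ⊆ ⋃ x : u, ball (x : X) (8 * r x) := by
  have := hd.secondCountableTopology
  obtain ⟨u, huA, hdisj, hcov⟩ := Vitali.exists_disjoint_subfamily_covering_enlargement_closedBall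
    A id r δ hrδ 5 (by norm_num)
  refine ⟨u, huA, hdisj.countable_of_nonempty_interior fun x hx => ?_, hdisj, fun x hx => ?_⟩
  · exact ⟨x, ball_subset_interior_closedBall (mem_ball_self (hr x (huA hx)))⟩
  · obtain ⟨y, hy, hsub⟩ := hcov x hx
    have hry := hr y (huA hy)
    exact mem_iUnion.2 ⟨⟨y, hy⟩,
      closedBall_subset_ball (by linarith) (hsub (mem_closedBall_self (hr x hx).le))⟩

lemma IsDoublingWith.exists_finset_pairwiseDisjoint_le_sum_perimeterOn [Nonempty X]
    (hd : IsDoublingWith μ Cd) (E : Set X) {A : Set X} (hA : codimOneH μ A ≠ 0) {K : ℝ≥0∞}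
    (hK : K ≠ ⊤) :
    ∃ b : ℝ≥0∞, b ≠ 0 ∧ ∃ δ : ℝ, 0 < δ ∧ ∀ r : X → ℝ, (∀ x ∈ A, 0 < r x ∧ r x ≤ δ ∧
        μ (ball x (r x)) / ENNReal.ofReal (r x) ≤ K * perimeterOn μ E (ball x (r x))) →
      ∃ s : Finset X, (s : Set X) ⊆ A ∧
        ((s : Set X).PairwiseDisjoint fun x => closedBall x (r x)) ∧
        b ≤ ∑ x ∈ s, perimeterOn μ E (ball x (r x)) := by
  rw [Ne, codimOneH_eq_zero_iff] at hA
  push Not at hA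
  obtain ⟨δ, hδ, ε, hε, hcov⟩ := hA
  have hC : (Cd : ℝ≥0∞) ^ 3 * K ≠ ⊤ := ENNReal.mul_ne_top (by simp) hK
  obtain ⟨b, hb0, hb⟩ := exists_between (ENNReal.div_pos hε hC)
  refine ⟨b, hb0.ne', δ / 8, by positivity, fun r hr => ?_⟩
  obtain ⟨u, huA, hu, hdisj, hAu⟩ := hd.exists_countable_pairwiseDisjoint_cover
    (fun x hx => (hr x hx).1) fun x hx => (hr x hx).2.1
  have := hu.to_subtype
  obtain ⟨c', r', hr', hA', htsum⟩ := exists_nat_cover_tsum_eq (μ := μ) hδ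
    (fun x : u => by linarith [(hr x (huA x.2)).2.1]) hAu
  have hball : ∀ x ∈ A, μ (ball x (8 * r x)) / ENNReal.ofReal (8 * r x) ≤
      Cd ^ 3 * K * perimeterOn μ E (ball x (r x)) := fun x hx => by
    obtain ⟨hrx, -, hPx⟩ := hr x hx
    have h8 := hd.ball_le x hrx 3
    norm_num only at h8
    calc μ (ball x (8 * r x)) / ENNReal.ofReal (8 * r x)
        ≤ Cd ^ 3 * μ (ball x (r x)) / ENNReal.ofReal (r x) :=
          ENNReal.div_le_div h8 (ENNReal.ofReal_le_ofReal (by linarith))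
      _ ≤ Cd ^ 3 * K * perimeterOn μ E (ball x (r x)) := by
          rw [mul_div_assoc, mul_assoc]
          gcongr
  have hsum : b < ∑' x : u, perimeterOn μ E (ball (x : X) (r x)) := by
    refine hb.trans_le (ENNReal.div_le_of_le_mul' ?_)
    rw [← ENNReal.tsum_mul_left]
    exact (hcov c' r' hr' hA').trans
      (htsum.trans_le (ENNReal.tsum_le_tsum fun x => hball x (huA x.2)))
  rw [ENNReal.tsum_eq_iSup_sum, lt_iSup_iff] at hsum
  obtain ⟨s, hs⟩ := hsum
  have hsu : ((s.map (Function.Embedding.subtype _) : Finset X) : Set X) ⊆ u := by simp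
  refine ⟨s.map (Function.Embedding.subtype _), hsu.trans huA, hdisj.subset hsu, ?_⟩
  rw [Finset.sum_map]
  exact hs.le

lemma IsDoublingWith.codimOneH_eq_zero_of_frequently [Nonempty X] (hd : IsDoublingWith μ Cd)
    {E : Set X} (hE : NullMeasurableSet E μ) (hfin : perimeterOn μ E univ ≠ ⊤) {l : ℝ}
    {t K : ℝ≥0∞} (hl : 1 < l) (ht : t < 1) (hK : K ≠ ⊤) {A : Set X}
    (h : ∀ x ∈ A, ∃ᶠ r in 𝓝[>] (0 : ℝ),
      μ (ball x r) / ENNReal.ofReal r ≤ K * perimeterOn μ E (ball x r) ∧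
      ENNReal.ofReal (l / r) * μ (E ∩ ball x (2 * r)) ≤ t * perimeterOn μ E (ball x r)) :
    codimOneH μ A = 0 := by
  by_contra hA
  obtain ⟨b, hb, δ₀, hδ₀, hvitali⟩ :=
    hd.exists_finset_pairwiseDisjoint_le_sum_perimeterOn E hA hK
  have hgain : perimeterOn μ E univ + (1 - t) * b ≤ perimeterOn μ E univ := by
    refine totVarOn_univ_add_le_of_forall_exists (Classical.arbitrary X) fun ε hε R => ?_
    obtain ⟨η, hη, hηP⟩ := ENNReal.exists_nnreal_pos_mul_lt hfin (ENNReal.half_pos hε).ne'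
    have hδ : 0 < min δ₀ η := lt_min hδ₀ (NNReal.coe_pos.2 hη)
    choose! r hPr hr using fun x hx => ((h x hx).and_eventually (Ioc_mem_nhdsGT hδ)).exists
    obtain ⟨s, hsA, hdisj, hbs⟩ := hvitali r fun x hx =>
      ⟨(hr x hx).1, (hr x hx).2.trans (min_le_left _ _), (hPr x hx).1⟩
    obtain ⟨v, hv, hlip, hdist⟩ := exists_locallyLipschitz_of_disjoint hE hfin s id
      (fun x hx => (hr x (hsA hx)).1) (fun x hx => (hr x (hsA hx)).2.trans (min_le_right _ _)) hl
      ht.le hdisj (fun x hx => (hPr x (hsA hx)).2) (ENNReal.half_pos hε).ne'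
      (Classical.arbitrary X) R
    refine ⟨v, hv, ?_, ?_⟩
    · calc ∫⁻ x, lipConst v x ∂μ + (1 - t) * b ≤ perimeterOn μ E univ + ε / 2 :=
            (add_le_add_right (mul_le_mul_right hbs _) _).trans hlip
        _ ≤ perimeterOn μ E univ + ε := by
            gcongr
            exact ENNReal.half_le_self
    · rw [ENNReal.ofReal_coe_nnreal] at hdist
      exact hdist.trans ((add_le_add_left hηP.le _).trans_eq (ENNReal.add_halves ε))
  exact (ENNReal.lt_add_right hfin (mul_ne_zero (tsub_pos_of_lt ht).ne' hb)).not_ge hgain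

end NullSet

section Scales

/-- `d r'` is at most `C * d r` whenever `r / 2 ≤ r' ≤ r`: the property of the densities of a
doubling measure that makes them comparable at nearby scales. -/
def HasHalvingBound (d : ℝ → ℝ≥0∞) (C : ℝ≥0) : Prop :=
  ∀ ⦃r r' : ℝ⦄, 0 < r → r / 2 ≤ r' → r' ≤ r → d r' ≤ C * d r

variable {d d' : ℝ → ℝ≥0∞} {C : ℝ≥0}

lemma HasHalvingBound.le_of_gap (hd : HasHalvingBound d C) {κ : ℝ≥0∞} {s₁ : ℝ} (hs₁ : 0 < s₁)
    (hgap : ∀ s ∈ Ioc 0 s₁, d s ≤ C * κ → d s ≤ κ) (h : d s₁ ≤ κ) :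
    ∀ s ∈ Ioc 0 s₁, d s ≤ κ := by
  have hdyadic : ∀ (k : ℕ), ∀ s ∈ Ioc 0 s₁, s₁ / 2 ^ k ≤ s → d s ≤ κ := by
    intro k
    induction k with
    | zero =>
      intro s hs hle
      rw [pow_zero, div_one] at hle
      rwa [le_antisymm hs.2 hle]
    | succ k ih =>
      intro s hs hle
      have hdouble : d (min (2 * s) s₁) ≤ κ := by
        refine ih _ ⟨lt_min (mul_pos two_pos hs.1) hs₁, min_le_right _ _⟩ (le_min ?_ ?_)
        · rw [pow_succ, ← div_div] at hle
          linarith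
        · exact div_le_self hs₁.le (one_le_pow₀ one_le_two)
      refine hgap s hs ((hd (lt_min (mul_pos two_pos hs.1) hs₁) ?_
        (le_min (by linarith [hs.1]) hs.2)).trans (mul_le_mul_right hdouble _))
      linarith [min_le_left (2 * s) s₁]
  intro s hs
  obtain ⟨k, hk⟩ := exists_pow_lt_of_lt_one (div_pos hs.1 hs₁) (by norm_num : (1 / 2 : ℝ) < 1)
  refine hdyadic k s hs ?_
  rw [lt_div_iff₀ hs₁, one_div, inv_pow] at hk
  rw [div_eq_inv_mul]
  exact hk.le

lemma HasHalvingBound.tendsto_zero_of_le (hd : HasHalvingBound d C) (hC : 1 ≤ C)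
    (hsum : ∀ r, 0 < r → 1 ≤ d r + d' r) {κ : ℝ≥0∞} (hκ : κ * (C + 1) < 1) {s₁ : ℝ} (hs₁ : 0 < s₁)
    (hmin : ∀ s ∈ Ioc 0 s₁, d s ≤ κ ∨ d' s ≤ κ) (h : d s₁ ≤ κ)
    (hlim : Tendsto (fun r => min (d r) (d' r)) (𝓝[>] 0) (𝓝 0)) : Tendsto d (𝓝[>] 0) (𝓝 0) := by
  have hlarge : ∀ s ∈ Ioc 0 s₁, d s ≤ C * κ → κ < d' s := fun s hs hds => by
    by_contra! hds'
    exact ((hsum s hs.1).trans_lt ((add_le_add hds hds').trans_lt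
      (by rwa [mul_comm, add_one_mul] at hκ))).false
  have hle := hd.le_of_gap hs₁
    (fun s hs hds => (hmin s hs).resolve_right (hlarge s hs hds).not_ge) h
  refine hlim.congr' ?_
  filter_upwards [Ioc_mem_nhdsGT hs₁] with s hs
  exact min_eq_left ((hle s hs).trans (hlarge s hs ((hle s hs).trans
    (le_mul_of_one_le_left' (ENNReal.one_le_coe_iff.2 hC)))).le)

-- A discrete connectedness argument: once `min d d'` is small, `d` and `d'` cannot exchange the
-- role of the minimum, since at the exchange both would be small while `1 ≤ d + d'`.
lemma HasHalvingBound.tendsto_zero_or_tendsto_zero (hd : HasHalvingBound d C)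
    (hd' : HasHalvingBound d' C) (hC : 1 ≤ C) (hsum : ∀ r, 0 < r → 1 ≤ d r + d' r)
    (hlim : Tendsto (fun r => min (d r) (d' r)) (𝓝[>] 0) (𝓝 0)) :
    Tendsto d (𝓝[>] 0) (𝓝 0) ∨ Tendsto d' (𝓝[>] 0) (𝓝 0) := by
  obtain ⟨κ, hκ0, hκ⟩ := ENNReal.exists_nnreal_pos_mul_lt
    (by simp : (C : ℝ≥0∞) + 1 ≠ ⊤) one_ne_zero
  obtain ⟨s₁, hs₁, hs⟩ := mem_nhdsGT_iff_exists_Ioc_subset.1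
    (hlim.eventually_le_const (ENNReal.coe_pos.2 hκ0))
  have hmin : ∀ s ∈ Ioc 0 s₁, d s ≤ κ ∨ d' s ≤ κ := fun s h => min_le_iff.1 (hs h)
  refine (hmin s₁ (right_mem_Ioc.2 hs₁)).imp
    (fun h => hd.tendsto_zero_of_le hC hsum hκ hs₁ hmin h hlim)
    fun h => hd'.tendsto_zero_of_le hC ?_ hκ hs₁ (fun s h => (hmin s h).symm) h ?_
  · simpa only [add_comm] using hsum
  · simpa only [min_comm] using hlim

lemma tendsto_const_mul_nhdsGT_zero {a : ℝ} (ha : 0 < a) :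
    Tendsto (fun r => a * r) (𝓝[>] 0) (𝓝[>] 0) := by
  refine tendsto_nhdsWithin_iff.2 ⟨tendsto_nhdsWithin_of_tendsto_nhds ?_, ?_⟩
  · simpa only [mul_zero] using (continuous_const_mul a).tendsto 0
  · exact eventually_mem_nhdsWithin.mono fun r (hr : 0 < r) => mul_pos ha hr

lemma frequently_comparable_of_limsup (h0 : limsup d (𝓝[>] 0) ≠ 0) (htop : limsup d (𝓝[>] 0) ≠ ⊤) :
    ∃ᶠ r in 𝓝[>] (0 : ℝ), d (8 * r) ≤ 2 * limsup d (𝓝[>] 0) ∧ d (4 * r) ≤ 4 * d r ∧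
      limsup d (𝓝[>] 0) / 2 ≤ d r := by
  set L := limsup d (𝓝[>] 0) with hL
  have hlt : L < 2 * L := by
    rw [two_mul]
    exact ENNReal.lt_add_right htop h0
  have hev : ∀ᶠ r in 𝓝[>] (0 : ℝ), d r < 2 * L := eventually_lt_of_limsup_lt (hL ▸ hlt)
  have hfreq : ∃ᶠ r in 𝓝[>] (0 : ℝ), L / 2 < d r :=
    frequently_lt_of_lt_limsup (by isBoundedDefault) (hL ▸ ENNReal.half_lt_self h0 htop)
  refine (hfreq.and_eventually
    (((tendsto_const_mul_nhdsGT_zero (by norm_num : (0 : ℝ) < 8)).eventually hev).and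
      ((tendsto_const_mul_nhdsGT_zero (by norm_num : (0 : ℝ) < 4)).eventually hev))).mono
    fun r ⟨hr, hr8, hr4⟩ => ⟨hr8.le, hr4.le.trans ?_, hr.le⟩
  calc 2 * L = 4 * (L / 2) := by
        rw [show (4 : ℝ≥0∞) = 2 * 2 by norm_num, mul_assoc,
          ENNReal.mul_div_cancel two_ne_zero ENNReal.ofNat_ne_top]
    _ ≤ 4 * d r := by gcongr

lemma HasHalvingBound.le_pow_mul (hd : HasHalvingBound d C) {r : ℝ} (hr : 0 < r) (i : ℕ) :
    d (r / 2 ^ i) ≤ C ^ i * d r := by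
  induction i with
  | zero => simp
  | succ i ih =>
    rw [pow_succ, pow_succ', ← div_div, mul_assoc]
    have hpos : 0 < r / 2 ^ i := by positivity
    exact (hd hpos le_rfl (by linarith)).trans (mul_le_mul_right ih _)

lemma HasHalvingBound.exists_le_mul_dyadic (hd : HasHalvingBound d C) {r r' : ℝ} (hr' : 0 < r')
    (hr'r : r' ≤ r) : ∃ j : ℕ, d r' ≤ C * d (r / 2 ^ j) := by
  have hr : 0 < r := hr'.trans_le hr'r
  obtain ⟨j, hj, hj'⟩ := exists_nat_pow_near_of_lt_one (div_pos hr' hr)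
    ((div_le_one hr).2 hr'r) (by norm_num : (0 : ℝ) < 1 / 2) (by norm_num)
  rw [one_div, inv_pow, lt_div_iff₀ hr, pow_succ] at hj
  rw [one_div, inv_pow, div_le_iff₀ hr] at hj'
  refine ⟨j, hd (by positivity) ?_ ?_⟩
  · rw [div_div, div_eq_inv_mul]
    exact hj.le
  · rwa [div_eq_inv_mul]

-- The scale is the first dyadic one at which `d` exceeds `C ^ 3 * d r₀`.
lemma HasHalvingBound.exists_first_large (hd : HasHalvingBound d C) (hC : 1 ≤ C) {r₀ r' : ℝ}
    (hr' : 0 < r') (hr'r₀ : r' ≤ r₀) {c : ℝ≥0∞} (h₀ : d r₀ ≤ c) (h' : C ^ 4 * c < d r') :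
    ∃ r, 0 < r ∧ r ≤ r₀ ∧ d (8 * r) ≤ C ^ 3 * c ∧ d (4 * r) ≤ C ^ 3 * c ∧ C ^ 3 * c ≤ d r := by
  classical
  have hr₀ : 0 < r₀ := hr'.trans_le hr'r₀
  have hex : ∃ j : ℕ, C ^ 3 * c < d (r₀ / 2 ^ j) := by
    obtain ⟨j, hj⟩ := hd.exists_le_mul_dyadic hr' hr'r₀
    refine ⟨j, lt_of_not_ge fun hle => (h'.trans_le (hj.trans ?_)).false⟩
    rw [pow_succ', mul_assoc]
    gcongr
  obtain ⟨j, hj, hfirst⟩ := Nat.findX hex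
  have hj4 : 4 ≤ j := by
    by_contra! hlt
    refine (hj.trans_le ((hd.le_pow_mul hr₀ j).trans (mul_le_mul' ?_ h₀))).false
    exact pow_le_pow_right₀ (ENNReal.one_le_coe_iff.2 hC) (by lia)
  obtain ⟨k, rfl⟩ := Nat.exists_eq_add_of_le' hj4
  have hscale8 : 8 * (r₀ / 2 ^ (k + 4)) = r₀ / 2 ^ (k + 1) := by
    rw [pow_add, pow_add]
    field_simp
    norm_num
  have hscale4 : 4 * (r₀ / 2 ^ (k + 4)) = r₀ / 2 ^ (k + 2) := by
    rw [pow_add, pow_add]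
    field_simp
    norm_num
  refine ⟨r₀ / 2 ^ (k + 4), by positivity, div_le_self hr₀.le (one_le_pow₀ one_le_two), ?_, ?_,
    hj.le⟩
  · rw [hscale8]
    exact not_lt.1 (hfirst (k + 1) (by lia))
  · rw [hscale4]
    exact not_lt.1 (hfirst (k + 2) (by lia))

lemma HasHalvingBound.exists_frequently_comparable (hd : HasHalvingBound d C) (hC : 1 ≤ C)
    {c : ℝ≥0} (hinf : liminf d (𝓝[>] 0) < c) (hsup : limsup d (𝓝[>] 0) ≠ 0) :
    ∃ t : ℝ≥0∞, t ≠ 0 ∧ ∃ᶠ r in 𝓝[>] (0 : ℝ),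
      d (8 * r) ≤ 2 * (C ^ 4 * c) ∧ d (4 * r) ≤ 4 * d r ∧ t ≤ d r := by
  rcases le_or_gt (limsup d (𝓝[>] 0)) (C ^ 4 * c) with hle | hlt
  · refine ⟨limsup d (𝓝[>] 0) / 2, (ENNReal.half_pos hsup).ne',
      (frequently_comparable_of_limsup hsup (ne_top_of_le_ne_top (by finiteness) hle)).mono
        fun r ⟨hr8, hr4, hr⟩ => ⟨hr8.trans (by gcongr), hr4, hr⟩⟩
  · have hC0 : (C : ℝ≥0∞) ≠ 0 := ENNReal.coe_ne_zero.2 (one_pos.trans_le hC).ne'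
    refine ⟨C ^ 3 * c, mul_ne_zero (pow_ne_zero _ hC0) (bot_le.trans_lt hinf).ne', ?_⟩
    rw [(nhdsGT_basis (0 : ℝ)).frequently_iff]
    intro δ hδ
    have hsmall : ∃ᶠ r in 𝓝[>] (0 : ℝ), d r < c :=
      frequently_lt_of_liminf_lt (by isBoundedDefault) hinf
    have hlarge : ∃ᶠ r in 𝓝[>] (0 : ℝ), C ^ 4 * c < d r :=
      frequently_lt_of_lt_limsup (by isBoundedDefault) hlt
    obtain ⟨r₀, hr₀, hr₀δ⟩ := (hsmall.and_eventually (Ioo_mem_nhdsGT hδ)).exists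
    obtain ⟨r', hr', hr'r₀⟩ := (hlarge.and_eventually (Ioc_mem_nhdsGT hr₀δ.1)).exists
    obtain ⟨r, hr, hrr₀, h8, h4, h⟩ :=
      hd.exists_first_large hC hr'r₀.1 hr'r₀.2 hr₀.le hr'
    refine ⟨r, ⟨hr, hrr₀.trans_lt hr₀δ.2⟩, h8.trans ?_, ?_, h⟩
    · refine le_trans ?_ (le_mul_of_one_le_left' one_le_two)
      gcongr
      · exact ENNReal.one_le_coe_iff.2 hC
      · norm_num
    · exact (h4.trans h).trans (le_mul_of_one_le_left' (by norm_num))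

end Scales

section Density

variable {X : Type u} [PseudoMetricSpace X] [MeasurableSpace X] {μ : Measure X} {Cd : ℝ≥0}

lemma IsDoublingWith.div_measure_ball_le (hd : IsDoublingWith μ Cd) (x : X) {r r' : ℝ}
    (hr : 0 < r) (hr' : r / 2 ≤ r') {a b : ℝ≥0∞} (hab : a ≤ b) :
    a / μ (ball x r') ≤ Cd * (b / μ (ball x r)) := by
  have hball : μ (ball x r) ≤ Cd * μ (ball x r') := by
    simpa only [pow_one] using hd.measure_le_of_subset_ball (by linarith) 1
      (ball_subset_ball (by linarith : r ≤ 2 ^ 1 * r'))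
  refine ENNReal.div_le_of_le_mul ?_
  calc a ≤ b / μ (ball x r) * μ (ball x r) := by
        rwa [ENNReal.div_mul_cancel (hd.ball_pos x hr).ne' (hd.ball_lt_top x r).ne]
    _ ≤ b / μ (ball x r) * (Cd * μ (ball x r')) := by gcongr
    _ = Cd * (b / μ (ball x r)) * μ (ball x r') := by ring

lemma IsDoublingWith.hasHalvingBound_measure_inter_div (hd : IsDoublingWith μ Cd) (F : Set X)
    (x : X) : HasHalvingBound (fun r => μ (F ∩ ball x r) / μ (ball x r)) Cd :=
  fun _ _ hr h h' =>
    hd.div_measure_ball_le x hr h (measure_mono (inter_subset_inter_right _ (ball_subset_ball h')))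

/-- The scale-invariant perimeter density `r * P(E, B(x, r)) / μ(B(x, r))` of `E` at `x`. -/
abbrev perimeterDensity (μ : Measure X) (E : Set X) (x : X) (r : ℝ) : ℝ≥0∞ :=
  ENNReal.ofReal r * perimeterOn μ E (ball x r) / μ (ball x r)

lemma perimeterDensity_compl (E : Set X) : perimeterDensity μ Eᶜ = perimeterDensity μ E := by
  funext x r
  rw [perimeterDensity, perimeterOn_compl]

lemma IsDoublingWith.perimeterDensity_mul (hd : IsDoublingWith μ Cd) (E : Set X) (x : X) {r : ℝ}
    (hr : 0 < r) : perimeterDensity μ E x r * μ (ball x r) =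
      ENNReal.ofReal r * perimeterOn μ E (ball x r) :=
  ENNReal.div_mul_cancel (hd.ball_pos x hr).ne' (hd.ball_lt_top x r).ne

lemma IsDoublingWith.hasHalvingBound_perimeterDensity (hd : IsDoublingWith μ Cd) (E : Set X)
    (x : X) : HasHalvingBound (perimeterDensity μ E x) Cd :=
  fun _ _ hr h h' => hd.div_measure_ball_le x hr h
    (mul_le_mul' (ENNReal.ofReal_le_ofReal h') (totVarOn_mono _ (ball_subset_ball h')))

lemma IsDoublingWith.measure_ball_div_le (hd : IsDoublingWith μ Cd) {E : Set X} {x : X} {r : ℝ}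
    (hr : 0 < r) {t : ℝ≥0∞} (ht : t ≠ 0) (ht' : t ≠ ⊤) (h : t ≤ perimeterDensity μ E x r) :
    μ (ball x r) / ENNReal.ofReal r ≤ t⁻¹ * perimeterOn μ E (ball x r) := by
  refine ENNReal.div_le_of_le_mul ?_
  calc μ (ball x r) = t⁻¹ * (t * μ (ball x r)) := by
        rw [← mul_assoc, ENNReal.inv_mul_cancel ht ht', one_mul]
    _ ≤ t⁻¹ * (perimeterDensity μ E x r * μ (ball x r)) := by gcongr
    _ = t⁻¹ * perimeterOn μ E (ball x r) * ENNReal.ofReal r := by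
        rw [hd.perimeterDensity_mul E x hr]
        ring

lemma IsDoublingWith.perimeterOn_le_of_perimeterDensity_le (hd : IsDoublingWith μ Cd) {E : Set X}
    {x : X} {r : ℝ} (hr : 0 < r)
    (h : perimeterDensity μ E x (4 * r) ≤ 4 * perimeterDensity μ E x r) :
    perimeterOn μ E (ball x (4 * r)) ≤ Cd ^ 2 * perimeterOn μ E (ball x r) := by
  have hr4 : 0 < 4 * r := by positivity
  have hball := hd.ball_le x hr 2
  norm_num only at hball
  rw [← ENNReal.mul_le_mul_iff_right (ENNReal.ofReal_pos.2 hr4).ne' ENNReal.ofReal_ne_top]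
  calc ENNReal.ofReal (4 * r) * perimeterOn μ E (ball x (4 * r))
      = perimeterDensity μ E x (4 * r) * μ (ball x (4 * r)) :=
        (hd.perimeterDensity_mul E x hr4).symm
    _ ≤ 4 * perimeterDensity μ E x r * (Cd ^ 2 * μ (ball x r)) := mul_le_mul' h hball
    _ = 4 * Cd ^ 2 * (ENNReal.ofReal r * perimeterOn μ E (ball x r)) := by
        rw [← hd.perimeterDensity_mul E x hr]
        ring
    _ = ENNReal.ofReal (4 * r) * (Cd ^ 2 * perimeterOn μ E (ball x r)) := by
        rw [ENNReal.ofReal_mul (by norm_num), ENNReal.ofReal_ofNat]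
        ring

end Density

section UpperBound

variable {X : Type u} [PseudoMetricSpace X] [MeasurableSpace X] [BorelSpace X] {μ : Measure X}
  {Cd : ℝ≥0}

-- The gain condition of `codimOneH_eq_zero_of_frequently` holds with `l` slightly above `1`:
-- cutting at `B(x,r)` costs at most `μ(B(x,2r)) / r ≤ Cd * μ(B(x,r)) / r < P(E, B(x,r))`.
lemma IsDoublingWith.codimOneH_lt_limsup_perimeterDensity_of_lt [Nonempty X]
    (hd : IsDoublingWith μ Cd) {E : Set X} (hE : NullMeasurableSet E μ)
    (hfin : perimeterOn μ E univ ≠ ⊤) {t : ℝ≥0} (ht : Cd < t) :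
    codimOneH μ {x | (t : ℝ≥0∞) < limsup (perimeterDensity μ E x) (𝓝[>] 0)} = 0 := by
  have hCd : 0 < Cd := one_pos.trans_le (hd.one_le (Classical.arbitrary X))
  have ht0 : t ≠ 0 := (hCd.trans ht).ne'
  obtain ⟨l, hl, hlt⟩ := exists_between (show 1 < t / Cd from (one_lt_div hCd).2 ht)
  rw [lt_div_iff₀ hCd] at hlt
  refine hd.codimOneH_eq_zero_of_frequently hE hfin (l := l) (t := l * Cd / t) (K := (t : ℝ≥0∞)⁻¹)
    (by exact_mod_cast hl) ?_ (by simpa using ht0) fun x hx => ?_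
  · exact ENNReal.div_lt_of_lt_mul (by rw [one_mul]; exact_mod_cast hlt)
  have hfreq : ∃ᶠ r in 𝓝[>] (0 : ℝ), t < perimeterDensity μ E x r :=
    frequently_lt_of_lt_limsup (by isBoundedDefault) hx
  refine (hfreq.and_eventually self_mem_nhdsWithin).mono fun r ⟨hlt_density, (hr : 0 < r)⟩ => ?_
  have hball := hd.measure_ball_div_le hr (by exact_mod_cast ht0) ENNReal.coe_ne_top hlt_density.le
  refine ⟨hball, ?_⟩
  calc ENNReal.ofReal (l / r) * μ (E ∩ ball x (2 * r))
      ≤ l / ENNReal.ofReal r * (Cd * μ (ball x r)) := by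
        rw [ENNReal.ofReal_div_of_pos hr, ENNReal.ofReal_coe_nnreal]
        gcongr
        exact (measure_mono inter_subset_right).trans (hd x r hr).2.1
    _ = l * Cd * (μ (ball x r) / ENNReal.ofReal r) := by
        simp only [div_eq_mul_inv]
        ring
    _ ≤ l * Cd * ((t : ℝ≥0∞)⁻¹ * perimeterOn μ E (ball x r)) := by gcongr
    _ = l * Cd / t * perimeterOn μ E (ball x r) := by rw [← mul_assoc, div_eq_mul_inv]

lemma IsDoublingWith.codimOneH_lt_limsup_perimeterDensity [Nonempty X]
    (hd : IsDoublingWith μ Cd) {E : Set X} (hE : NullMeasurableSet E μ)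
    (hfin : perimeterOn μ E univ ≠ ⊤) :
    codimOneH μ {x | (Cd : ℝ≥0∞) < limsup (perimeterDensity μ E x) (𝓝[>] 0)} = 0 := by
  obtain ⟨t, -, ht, htend⟩ := exists_seq_strictAnti_tendsto Cd
  exact codimOneH_mono_null
    (fun x hx => mem_iUnion.2 ((ENNReal.tendsto_coe.2 htend).eventually_lt_const hx).exists)
    (codimOneH_iUnion_eq_zero fun n =>
      hd.codimOneH_lt_limsup_perimeterDensity_of_lt hE hfin (ht n))

end UpperBound

section Gain

variable {X : Type u} [MeasurableSpace X] {μ : Measure X} {Cd : ℝ≥0}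

lemma measure_le_measure_inter_add_measure_compl_inter (E B : Set X) :
    μ B ≤ μ (E ∩ B) + μ (Eᶜ ∩ B) := by
  simpa only [sdiff_eq, inter_comm B] using measure_le_inter_add_sdiff μ B E

lemma measure_le_two_mul_measure_compl_inter {E B : Set X} (hB : μ B ≠ ⊤)
    (h : 2 * μ (E ∩ B) ≤ μ B) : μ B ≤ 2 * μ (Eᶜ ∩ B) := by
  rw [← ENNReal.add_le_add_iff_left hB, ← two_mul]
  calc 2 * μ B ≤ 2 * μ (E ∩ B) + 2 * μ (Eᶜ ∩ B) := by
        rw [← mul_add]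
        gcongr
        exact measure_le_measure_inter_add_measure_compl_inter E B
    _ ≤ μ B + 2 * μ (Eᶜ ∩ B) := by gcongr

variable [PseudoMetricSpace X]

lemma IsDoublingWith.two_mul_measure_inter_closedBall_le (hd : IsDoublingWith μ Cd) {E : Set X}
    {x y : X} {r : ℝ} (hr : 0 < r) {n : ℕ}
    (hsmall : 2 * (Cd : ℝ≥0∞) ^ (n + 3) * μ (E ∩ ball x (4 * r)) ≤ μ (ball x (4 * r)))
    (hy : y ∈ ball x (2 * r)) :
    2 * μ (E ∩ closedBall y (r / 2 ^ n)) ≤ μ (closedBall y (r / 2 ^ n)) := by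
  rw [mem_ball] at hy
  have hsub : closedBall y (r / 2 ^ n) ⊆ ball x (4 * r) := by
    have hle : r / 2 ^ n ≤ r := div_le_self hr.le (one_le_pow₀ one_le_two)
    exact (closedBall_subset_closedBall hle).trans
      ((closedBall_subset_ball (by linarith : r < 2 * r)).trans (ball_subset_ball' (by linarith)))
  have hball : μ (ball x (4 * r)) ≤ (Cd : ℝ≥0∞) ^ (n + 3) * μ (ball y (r / 2 ^ n)) := by
    refine hd.measure_le_of_subset_ball (by positivity) (n + 3) (ball_subset_ball' ?_)
    have hscale : (2 : ℝ) ^ (n + 3) * (r / 2 ^ n) = 8 * r := by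
      rw [pow_add]
      field_simp
      norm_num
    rw [hscale, dist_comm]
    linarith
  have hC0 : (Cd : ℝ≥0∞) ^ (n + 3) ≠ 0 :=
    pow_ne_zero _ (ENNReal.coe_ne_zero.2 (one_pos.trans_le (hd.one_le x)).ne')
  rw [← ENNReal.mul_le_mul_iff_right hC0 (by simp)]
  calc (Cd : ℝ≥0∞) ^ (n + 3) * (2 * μ (E ∩ closedBall y (r / 2 ^ n)))
      ≤ 2 * (Cd : ℝ≥0∞) ^ (n + 3) * μ (E ∩ ball x (4 * r)) := by
        rw [← mul_assoc, mul_comm _ (2 : ℝ≥0∞)]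
        gcongr
    _ ≤ (Cd : ℝ≥0∞) ^ (n + 3) * μ (ball y (r / 2 ^ n)) := hsmall.trans hball
    _ ≤ (Cd : ℝ≥0∞) ^ (n + 3) * μ (closedBall y (r / 2 ^ n)) := by
        gcongr
        exact ball_subset_closedBall

lemma RelIsoperimetric.measure_ball_le_of_half_density {K : ℝ≥0} {E : Set X}
    (hE : RelIsoperimetric μ K E) (hd : IsDoublingWith μ Cd) {y : X} {s : ℝ} (hs : 0 < s)
    (hin : μ (closedBall y s) ≤ 2 * μ (E ∩ closedBall y s))
    (hout : 2 * μ (E ∩ closedBall y (2 * s)) ≤ μ (closedBall y (2 * s))) :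
    μ (ball y (4 * s)) ≤
      2 * Cd ^ 2 * (K * ENNReal.ofReal (4 * s)) * perimeterOn μ E (ball y (2 * (4 * s))) := by
  have hsub : closedBall y (2 * s) ⊆ ball y (4 * s) := closedBall_subset_ball (by linarith)
  have hcompl := measure_le_two_mul_measure_compl_inter
    ((measure_mono hsub).trans_lt (hd.ball_lt_top y _)).ne hout
  have hballs : μ (ball y (4 * s)) ≤ (Cd : ℝ≥0∞) ^ 2 * μ (ball y s) := by
    refine hd.measure_le_of_subset_ball hs 2 (ball_subset_ball ?_)
    norm_num
  calc μ (ball y (4 * s))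
      ≤ 2 * Cd ^ 2 * min (μ (E ∩ ball y (4 * s))) (μ (Eᶜ ∩ ball y (4 * s))) := by
        rw [mul_comm (2 : ℝ≥0∞), mul_assoc, mul_min]
        refine hballs.trans (mul_le_mul_right (le_min ?_ ?_) _)
        · refine (measure_mono ball_subset_closedBall).trans (hin.trans ?_)
          gcongr
          exact (closedBall_subset_closedBall (by linarith)).trans hsub
        · refine (measure_mono (ball_subset_closedBall.trans
            (closedBall_subset_closedBall (by linarith)))).trans (hcompl.trans ?_)
          gcongr
    _ ≤ 2 * Cd ^ 2 * (K * ENNReal.ofReal (4 * s) * perimeterOn μ E (ball y (2 * (4 * s)))) :=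
        mul_le_mul_right (hE y (4 * s) (by positivity)) _
    _ = 2 * Cd ^ 2 * (K * ENNReal.ofReal (4 * s)) * perimeterOn μ E (ball y (2 * (4 * s))) := by
        ring

lemma RelIsoperimetric.exists_measure_ball_le {K : ℝ≥0} {E : Set X}
    (hE : RelIsoperimetric μ K E) (hd : IsDoublingWith μ Cd) {y : X} {r : ℝ} (hr : 0 < r) {n : ℕ}
    (hout : 2 * μ (E ∩ closedBall y (r / 2 ^ n)) ≤ μ (closedBall y (r / 2 ^ n)))
    (hin : ∀ᶠ s in 𝓝[>] (0 : ℝ), μ (closedBall y s) < 2 * μ (E ∩ closedBall y s)) :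
    ∃ s, 0 < s ∧ s ≤ 2 * r / 2 ^ n ∧ μ (ball y s) ≤
      2 * Cd ^ 2 * (K * ENNReal.ofReal s) * perimeterOn μ E (ball y (2 * s)) := by
  have hlim : Tendsto (fun j : ℕ => r / 2 ^ j) atTop (𝓝[>] 0) := by
    refine tendsto_nhdsWithin_iff.2 ⟨?_, Eventually.of_forall fun j => ?_⟩
    · simpa only [div_eq_mul_inv, one_mul, inv_pow, mul_zero] using
        (tendsto_pow_atTop_nhds_zero_of_lt_one (r := (1 / 2 : ℝ)) (by norm_num)
          (by norm_num)).const_mul r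
    · exact mem_Ioi.2 (by positivity)
  obtain ⟨i, hi, hiout, hiin⟩ : ∃ i ≥ n,
      2 * μ (E ∩ closedBall y (r / 2 ^ i)) ≤ μ (closedBall y (r / 2 ^ i)) ∧
      μ (closedBall y (r / 2 ^ (i + 1))) < 2 * μ (E ∩ closedBall y (r / 2 ^ (i + 1))) := by
    by_contra! hstep
    obtain ⟨j, hj, hnj⟩ := ((hlim.eventually hin).and (eventually_ge_atTop n)).exists
    exact hj.not_ge (Nat.le_induction hout hstep j hnj)
  have hscale : r / 2 ^ i = 2 * (r / 2 ^ (i + 1)) := by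
    rw [pow_succ]
    field_simp
  rw [hscale] at hiout
  refine ⟨4 * (r / 2 ^ (i + 1)), by positivity, ?_,
    hE.measure_ball_le_of_half_density hd (by positivity) hiin.le hiout⟩
  calc 4 * (r / 2 ^ (i + 1)) = 2 * r / 2 ^ i := by
        rw [mul_div_assoc, hscale]
        ring
    _ ≤ 2 * r / 2 ^ n := by
        gcongr
        norm_num

variable [BorelSpace X]

lemma IsDoublingWith.measure_le_of_forall_exists_measure_ball_le (hd : IsDoublingWith μ Cd)
    {E A W : Set X} {a : ℝ≥0∞} {δ : ℝ}
    (h : ∀ y ∈ A, ∃ s, 0 < s ∧ s ≤ δ ∧ ball y (2 * s) ⊆ W ∧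
      μ (ball y s) ≤ a * perimeterOn μ E (ball y (2 * s))) :
    μ A ≤ Cd ^ 4 * a * perimeterOn μ E W := by
  choose! s hs0 hsδ hsW hs using h
  obtain ⟨u, huA, hu, hdisj, hcov⟩ := hd.exists_countable_pairwiseDisjoint_cover
    (r := fun y => 2 * s y) (δ := 2 * δ) (fun y hy => mul_pos two_pos (hs0 y hy))
    fun y hy => by linarith [hsδ y hy]
  have := hu.to_subtype
  calc μ A ≤ ∑' y : u, μ (ball (y : X) (8 * (2 * s y))) :=
        (measure_mono hcov).trans (measure_iUnion_le _)
    _ ≤ ∑' y : u, Cd ^ 4 * a * perimeterOn μ E (ball (y : X) (2 * s y)) := by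
        refine ENNReal.tsum_le_tsum fun y => ?_
        rw [mul_assoc]
        refine (hd.measure_le_of_subset_ball (hs0 y (huA y.2)) 4 (ball_subset_ball ?_)).trans
          (mul_le_mul_right (hs y (huA y.2)) _)
        linarith
    _ ≤ Cd ^ 4 * a * perimeterOn μ E W := by
        rw [ENNReal.tsum_mul_left]
        gcongr
        refine tsum_totVarOn_le_of_subset _ (fun _ => isOpen_ball) (fun y z hyz => ?_)
          fun y => hsW y (huA y.2)
        exact (hdisj y.2 z.2 (Subtype.coe_injective.ne hyz)).mono ball_subset_closedBall
          ball_subset_closedBall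

lemma IsDoublingWith.ae_eventually_measure_closedBall_lt
    (hd : IsDoublingWith μ Cd) {E : Set X} (hE : NullMeasurableSet E μ) :
    ∀ᵐ y ∂μ, y ∈ E → ∀ᶠ s in 𝓝[>] (0 : ℝ),
      μ (closedBall y s) < 2 * μ (E ∩ closedBall y s) := by
  have := hd.isLocallyFiniteMeasure
  have := hd.isUnifLocDoublingMeasure
  have := hd.secondCountableTopology
  rw [← ae_restrict_iff'₀ hE]
  filter_upwards [IsUnifLocDoublingMeasure.ae_tendsto_measure_inter_div μ E 1] with y hy
  have hcenter : ∀ᶠ s in 𝓝[>] (0 : ℝ), y ∈ closedBall y (1 * s) :=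
    eventually_mem_nhdsWithin.mono fun s (hs : 0 < s) =>
      mem_closedBall_self (by rw [one_mul]; exact hs.le)
  filter_upwards [(hy _ id tendsto_id hcenter).eventually_const_lt
    (ENNReal.inv_lt_one.2 ENNReal.one_lt_two), self_mem_nhdsWithin] with s hs (hs0 : 0 < s)
  have hpos : μ (closedBall y s) ≠ 0 :=
    ((hd.ball_pos y hs0).trans_le (measure_mono ball_subset_closedBall)).ne'
  have htop : μ (closedBall y s) ≠ ⊤ :=
    ((measure_mono (closedBall_subset_ball (lt_add_one _))).trans_lt (hd.ball_lt_top y _)).ne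
  rwa [id_eq, ENNReal.lt_div_iff_mul_lt (Or.inl hpos) (Or.inl htop), mul_comm, ← div_eq_mul_inv,
    ENNReal.div_lt_iff (Or.inl two_ne_zero) (Or.inl ENNReal.ofNat_ne_top), mul_comm] at hs

lemma RelIsoperimetric.measure_inter_ball_le {K : ℝ≥0} {E : Set X}
    (hE : RelIsoperimetric μ K E) (hd : IsDoublingWith μ Cd) (hEm : NullMeasurableSet E μ) {x : X}
    {r : ℝ} (hr : 0 < r) {n : ℕ} (hn : 1 ≤ n)
    (hsmall : 2 * (Cd : ℝ≥0∞) ^ (n + 3) * μ (E ∩ ball x (4 * r)) ≤ μ (ball x (4 * r))) :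
    μ (E ∩ ball x (2 * r)) ≤ Cd ^ 4 * (2 * Cd ^ 2 * (K * ENNReal.ofReal (2 * r / 2 ^ n))) *
      perimeterOn μ E (ball x (4 * r)) := by
  set G := {y ∈ E ∩ ball x (2 * r) |
    ∀ᶠ s in 𝓝[>] (0 : ℝ), μ (closedBall y s) < 2 * μ (E ∩ closedBall y s)}
  have hEG : μ (E ∩ ball x (2 * r)) ≤ μ G := by
    refine measure_mono_ae ?_
    filter_upwards [hd.ae_eventually_measure_closedBall_lt hEm] with y hy hyE
    exact ⟨hyE, hy hyE.1⟩
  refine hEG.trans (hd.measure_le_of_forall_exists_measure_ball_le (δ := 2 * r / 2 ^ n) ?_)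
  rintro y ⟨⟨-, hyx⟩, hy⟩
  obtain ⟨s, hs, hsr, hball⟩ := hE.exists_measure_ball_le hd hr
    (hd.two_mul_measure_inter_closedBall_le hr hsmall hyx) hy
  refine ⟨s, hs, hsr, ball_subset_ball' ?_, hball.trans (by gcongr)⟩
  have hs_le : s ≤ 2 * r / 2 ^ 1 := hsr.trans (by gcongr; norm_num)
  linarith [mem_ball.1 hyx]

end Gain

section LowerBound

variable {X : Type u} [PseudoMetricSpace X] [MeasurableSpace X] {μ : Measure X} {Cd K : ℝ≥0}
  {E : Set X}

lemma IsDoublingWith.one_le_measure_inter_div_add (hd : IsDoublingWith μ Cd) (E : Set X) (x : X)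
    {r : ℝ} (hr : 0 < r) :
    1 ≤ μ (E ∩ ball x r) / μ (ball x r) + μ (Eᶜ ∩ ball x r) / μ (ball x r) := by
  rw [← ENNReal.add_div, ENNReal.le_div_iff_mul_le (Or.inl (hd.ball_pos x hr).ne')
    (Or.inl (hd.ball_lt_top x r).ne), one_mul]
  exact measure_le_measure_inter_add_measure_compl_inter E _

lemma RelIsoperimetric.min_measure_le_perimeterDensity (hE : RelIsoperimetric μ K E)
    (hd : IsDoublingWith μ Cd) (x : X) {s : ℝ} (hs : 0 < s) :
    min (μ (E ∩ ball x s)) (μ (Eᶜ ∩ ball x s)) ≤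
      K * Cd * perimeterDensity μ E x (2 * s) * μ (ball x s) := by
  calc min (μ (E ∩ ball x s)) (μ (Eᶜ ∩ ball x s))
      ≤ K * ENNReal.ofReal s * perimeterOn μ E (ball x (2 * s)) := hE x s hs
    _ ≤ K * (ENNReal.ofReal (2 * s) * perimeterOn μ E (ball x (2 * s))) := by
        rw [mul_assoc]
        gcongr
        linarith
    _ = K * (perimeterDensity μ E x (2 * s) * μ (ball x (2 * s))) := by
        rw [hd.perimeterDensity_mul E x (by positivity)]
    _ ≤ K * (perimeterDensity μ E x (2 * s) * (Cd * μ (ball x s))) := by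
        gcongr
        exact (hd x s hs).2.1
    _ = K * Cd * perimeterDensity μ E x (2 * s) * μ (ball x s) := by ring

lemma RelIsoperimetric.limsup_perimeterDensity_ne_zero (hE : RelIsoperimetric μ K E)
    (hd : IsDoublingWith μ Cd) {x : X} (hx : x ∈ measBdry μ E) :
    limsup (perimeterDensity μ E x) (𝓝[>] 0) ≠ 0 := by
  intro h0
  have hdensity : Tendsto (perimeterDensity μ E x) (𝓝[>] 0) (𝓝 0) :=
    tendsto_of_le_liminf_of_limsup_le bot_le h0.le
  have hbound : Tendsto (fun s : ℝ => K * Cd * perimeterDensity μ E x (2 * s)) (𝓝[>] 0) (𝓝 0) := by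
    simpa only [mul_zero, Function.comp_def] using ENNReal.Tendsto.const_mul
      (hdensity.comp (tendsto_const_mul_nhdsGT_zero two_pos)) (Or.inr (by finiteness))
  have hmin : Tendsto (fun s => min (μ (E ∩ ball x s) / μ (ball x s))
      (μ (Eᶜ ∩ ball x s) / μ (ball x s))) (𝓝[>] 0) (𝓝 0) := by
    refine tendsto_of_tendsto_of_tendsto_of_le_of_le' tendsto_const_nhds hbound
      (Eventually.of_forall fun _ => bot_le) ?_
    filter_upwards [self_mem_nhdsWithin] with s (hs : 0 < s)
    have hpos := (hd.ball_pos x hs).ne'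
    have htop := (hd.ball_lt_top x s).ne
    exact min_le_iff.2 ((min_le_iff.1 (hE.min_measure_le_perimeterDensity hd x hs)).imp
      (ENNReal.div_le_iff hpos htop).2 (ENNReal.div_le_iff hpos htop).2)
  rcases (hd.hasHalvingBound_measure_inter_div E x).tendsto_zero_or_tendsto_zero
    (hd.hasHalvingBound_measure_inter_div Eᶜ x) (hd.one_le x)
    (fun r hr => hd.one_le_measure_inter_div_add E x hr) hmin with h | h
  · exact hx.1.ne' h.limsup_eq
  · exact hx.2.ne' h.limsup_eq

variable [BorelSpace X]

lemma RelIsoperimetric.ofReal_mul_measure_inter_ball_le (hE : RelIsoperimetric μ K E)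
    (hd : IsDoublingWith μ Cd) (hEm : NullMeasurableSet E μ) {x : X} {r : ℝ} (hr : 0 < r) {n : ℕ}
    (hn : 1 ≤ n) (hnK : 16 * Cd ^ 8 * K ≤ 2 ^ n)
    (hsmall : 2 * (Cd : ℝ≥0∞) ^ (n + 3) * μ (E ∩ ball x (4 * r)) ≤ μ (ball x (4 * r)))
    (h4 : perimeterDensity μ E x (4 * r) ≤ 4 * perimeterDensity μ E x r) :
    ENNReal.ofReal (2 / r) * μ (E ∩ ball x (2 * r)) ≤ 2⁻¹ * perimeterOn μ E (ball x r) := by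
  have hscale : ENNReal.ofReal (2 / r) * ENNReal.ofReal (2 * r / 2 ^ n) = (4 / 2 ^ n : ℝ≥0) := by
    rw [← ENNReal.ofReal_mul (by positivity), ← ENNReal.ofReal_coe_nnreal]
    congr 1
    push_cast
    field_simp
    norm_num
  have hconst : ((4 / 2 ^ n : ℝ≥0) : ℝ≥0∞) * (2 * Cd ^ 8 * K) ≤ 2⁻¹ := by
    have hreal : 4 / 2 ^ n * (2 * Cd ^ 8 * K) ≤ (2⁻¹ : ℝ≥0) := by
      rw [div_mul_eq_mul_div, div_le_iff₀ (by positivity)]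
      calc 4 * (2 * Cd ^ 8 * K) = 2⁻¹ * (16 * Cd ^ 8 * K) := by
            rw [← mul_assoc, ← mul_assoc, ← mul_assoc, ← mul_assoc]
            norm_num
        _ ≤ 2⁻¹ * 2 ^ n := by gcongr
    rw [← ENNReal.coe_ofNat, ← ENNReal.coe_inv two_ne_zero]
    exact_mod_cast hreal
  calc ENNReal.ofReal (2 / r) * μ (E ∩ ball x (2 * r))
      ≤ ENNReal.ofReal (2 / r) * (Cd ^ 4 * (2 * Cd ^ 2 * (K * ENNReal.ofReal (2 * r / 2 ^ n))) *
          (Cd ^ 2 * perimeterOn μ E (ball x r))) := by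
        gcongr
        exact (hE.measure_inter_ball_le hd hEm hr hn hsmall).trans
          (mul_le_mul_right (hd.perimeterOn_le_of_perimeterDensity_le hr h4) _)
    _ = ENNReal.ofReal (2 / r) * ENNReal.ofReal (2 * r / 2 ^ n) * (2 * Cd ^ 8 * K) *
          perimeterOn μ E (ball x r) := by ring
    _ ≤ 2⁻¹ * perimeterOn μ E (ball x r) := by
        rw [hscale]
        gcongr

lemma RelIsoperimetric.ofReal_mul_measure_inter_ball_le_or (hE : RelIsoperimetric μ K E)
    (hd : IsDoublingWith μ Cd) (hEm : NullMeasurableSet E μ) {x : X} {r : ℝ} (hr : 0 < r) {n : ℕ}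
    (hn : 1 ≤ n) (hnK : 16 * Cd ^ 8 * K ≤ 2 ^ n) {c : ℝ≥0} (hc : 4 * K * Cd ^ (n + 8) * c ≤ 1)
    (h8 : perimeterDensity μ E x (8 * r) ≤ 2 * (Cd ^ 4 * c))
    (h4 : perimeterDensity μ E x (4 * r) ≤ 4 * perimeterDensity μ E x r) :
    ENNReal.ofReal (2 / r) * μ (E ∩ ball x (2 * r)) ≤ 2⁻¹ * perimeterOn μ E (ball x r) ∨
      ENNReal.ofReal (2 / r) * μ (Eᶜ ∩ ball x (2 * r)) ≤ 2⁻¹ * perimeterOn μ Eᶜ (ball x r) := by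
  have hmin := hE.min_measure_le_perimeterDensity hd x (by positivity : 0 < 4 * r)
  rw [show 2 * (4 * r) = 8 * r by ring] at hmin
  have hsmall : 2 * (Cd : ℝ≥0∞) ^ (n + 3) *
      min (μ (E ∩ ball x (4 * r))) (μ (Eᶜ ∩ ball x (4 * r))) ≤ μ (ball x (4 * r)) := by
    calc 2 * (Cd : ℝ≥0∞) ^ (n + 3) * min (μ (E ∩ ball x (4 * r))) (μ (Eᶜ ∩ ball x (4 * r)))
        ≤ 2 * Cd ^ (n + 3) * (K * Cd * (2 * (Cd ^ 4 * c)) * μ (ball x (4 * r))) := by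
          gcongr
          exact hmin.trans (by gcongr)
      _ = (4 * K * Cd ^ (n + 8) * c : ℝ≥0) * μ (ball x (4 * r)) := by
          push_cast
          ring
      _ ≤ μ (ball x (4 * r)) := mul_le_of_le_one_left' (by exact_mod_cast hc)
  rw [mul_min, min_le_iff] at hsmall
  refine hsmall.imp (fun h => hE.ofReal_mul_measure_inter_ball_le hd hEm hr hn hnK h h4)
    fun h => hE.compl.ofReal_mul_measure_inter_ball_le hd hEm.compl hr hn hnK h ?_
  rwa [perimeterDensity_compl]

lemma IsDoublingWith.codimOneH_exists_frequently_eq_zero [Nonempty X] (hd : IsDoublingWith μ Cd)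
    (hEm : NullMeasurableSet E μ) (hfin : perimeterOn μ E univ ≠ ⊤) :
    codimOneH μ {x | ∃ t : ℝ≥0∞, t ≠ 0 ∧ ∃ᶠ r in 𝓝[>] (0 : ℝ), t ≤ perimeterDensity μ E x r ∧
      ENNReal.ofReal (2 / r) * μ (E ∩ ball x (2 * r)) ≤
        2⁻¹ * perimeterOn μ E (ball x r)} = 0 := by
  obtain ⟨u, -, hu, hlim⟩ := exists_seq_strictAnti_tendsto (0 : ℝ≥0)
  have hnull : ∀ m, codimOneH μ {x | ∃ᶠ r in 𝓝[>] (0 : ℝ), u m ≤ perimeterDensity μ E x r ∧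
      ENNReal.ofReal (2 / r) * μ (E ∩ ball x (2 * r)) ≤
        2⁻¹ * perimeterOn μ E (ball x r)} = 0 := fun m => by
    have hum : (u m : ℝ≥0∞) ≠ 0 := ENNReal.coe_ne_zero.2 (hu m).ne'
    exact hd.codimOneH_eq_zero_of_frequently hEm hfin one_lt_two
      (ENNReal.inv_lt_one.2 ENNReal.one_lt_two) (ENNReal.inv_ne_top.2 hum) fun x hx =>
        (Frequently.and_eventually hx self_mem_nhdsWithin).mono fun r ⟨⟨ht, hgain⟩, hr⟩ =>
          ⟨hd.measure_ball_div_le hr hum ENNReal.coe_ne_top ht, hgain⟩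
  refine codimOneH_mono_null (fun x ⟨t, ht, hfreq⟩ => ?_) (codimOneH_iUnion_eq_zero hnull)
  obtain ⟨m, hm⟩ := ((ENNReal.tendsto_coe.2 hlim).eventually_le_const
    (ENNReal.coe_zero.trans_lt (pos_iff_ne_zero.2 ht))).exists
  exact mem_iUnion.2 ⟨m, hfreq.mono fun r hr => ⟨hm.trans hr.1, hr.2⟩⟩

lemma RelIsoperimetric.codimOneH_liminf_perimeterDensity_lt [Nonempty X]
    (hE : RelIsoperimetric μ K E) (hd : IsDoublingWith μ Cd) (hEm : NullMeasurableSet E μ)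
    (hfin : perimeterOn μ E univ ≠ ⊤) {n : ℕ} (hn : 1 ≤ n) (hnK : 16 * Cd ^ 8 * K ≤ 2 ^ n)
    {c : ℝ≥0} (hc : 4 * K * Cd ^ (n + 8) * c ≤ 1) :
    codimOneH μ {x ∈ measBdry μ E | liminf (perimeterDensity μ E x) (𝓝[>] 0) < c} = 0 := by
  refine codimOneH_mono_null (fun x ⟨hx, hxc⟩ => ?_) (codimOneH_union_eq_zero
    (hd.codimOneH_exists_frequently_eq_zero hEm hfin)
    (hd.codimOneH_exists_frequently_eq_zero hEm.compl (by rwa [perimeterOn_compl])))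
  obtain ⟨t, ht, hfreq⟩ :=
    (hd.hasHalvingBound_perimeterDensity E x).exists_frequently_comparable (hd.one_le x) hxc
      (hE.limsup_perimeterDensity_ne_zero hd hx)
  have hgain := (hfreq.and_eventually self_mem_nhdsWithin).mono fun r ⟨⟨h8, h4, htr⟩, hr⟩ =>
    (hE.ofReal_mul_measure_inter_ball_le_or hd hEm hr hn hnK hc h8 h4).imp
      (And.intro htr) (And.intro htr)
  refine (frequently_or_distrib.1 hgain).imp (fun h => ⟨t, ht, h⟩) fun h => ⟨t, ht, ?_⟩
  rwa [perimeterDensity_compl]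

lemma exists_lowerDensity_constants (Cd K : ℝ≥0) :
    ∃ n : ℕ, 1 ≤ n ∧ 16 * Cd ^ 8 * K ≤ 2 ^ n ∧ ∃ c : ℝ≥0, 0 < c ∧ 4 * K * Cd ^ (n + 8) * c ≤ 1 := by
  obtain ⟨n, hn⟩ := pow_unbounded_of_one_lt (16 * Cd ^ 8 * K) (one_lt_two (α := ℝ≥0))
  refine ⟨n + 1, n.succ_pos, hn.le.trans (pow_le_pow_right₀ one_le_two n.le_succ),
    (4 * K * Cd ^ (n + 1 + 8) + 1)⁻¹, by positivity, ?_⟩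
  rw [← div_eq_mul_inv]
  exact div_le_one_of_le₀ le_self_add zero_le

end LowerBound

theorem statement3_general (Cd : ℝ≥0) (CP : ℝ) :
    ∃ c : ℝ, 0 < c ∧
      ∀ (X : Type u) [MetricSpace X] [MeasurableSpace X] [BorelSpace X] [Nonempty X]
        (μ : Measure X), IsDoublingWith μ Cd → SupportsPoincare μ CP →
        ∀ E : Set X, NullMeasurableSet E μ → perimeterOn μ E univ < ⊤ →
          ∃ N : Set X, N ⊆ measBdry μ E ∧ codimOneH μ N = 0 ∧
            ∀ x ∈ measBdry μ E \ N,
              ENNReal.ofReal c ≤ liminf (perimeterDensity μ E x) (𝓝[>] 0) ∧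
              limsup (perimeterDensity μ E x) (𝓝[>] 0) ≤ Cd := by
  obtain ⟨n, hn, hnK, c, hc, hcK⟩ := exists_lowerDensity_constants Cd CP.toNNReal
  refine ⟨c, hc, fun X _ _ _ _ μ hd hP E hE hfin => ?_⟩
  rw [ENNReal.ofReal_coe_nnreal]
  refine ⟨{x ∈ measBdry μ E | liminf (perimeterDensity μ E x) (𝓝[>] 0) < c} ∪
    {x ∈ measBdry μ E | Cd < limsup (perimeterDensity μ E x) (𝓝[>] 0)},
    union_subset (sep_subset _ _) (sep_subset _ _), codimOneH_union_eq_zero ?_ ?_, fun x hx => ?_⟩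
  · exact (hP.relIsoperimetric hd hE hfin.ne).codimOneH_liminf_perimeterDensity_lt hd hE hfin.ne
      hn hnK hcK
  · exact codimOneH_mono_null (fun x hx => hx.2)
      (hd.codimOneH_lt_limsup_perimeterDensity hE hfin.ne)
  · exact ⟨not_lt.1 fun h => hx.2 (Or.inl ⟨hx.1, h⟩), not_lt.1 fun h => hx.2 (Or.inr ⟨hx.1, h⟩)⟩

theorem statement3 (Cd : ℝ≥0) (CP : ℝ) (hCd : 1 ≤ Cd) (hCP : 0 < CP) :
    ∃ c : ℝ, 0 < c ∧
      ∀ (X : Type u) [MetricSpace X] [MeasurableSpace X] [BorelSpace X]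
        (μ : Measure X), GoodSpace X μ Cd CP →
        ∀ E : Set X, NullMeasurableSet E μ →
          totVarOn μ (E.indicator fun _ => (1:ℝ)) Set.univ < ⊤ →
          ∃ N : Set X, N ⊆ measBdry μ E ∧ codimOneH μ N = 0 ∧
            ∀ x ∈ measBdry μ E \ N,
              ENNReal.ofReal c ≤
                Filter.liminf
                  (fun r : ℝ => ENNReal.ofReal r *
                    totVarOn μ (E.indicator fun _ => (1:ℝ)) (ball x r) / μ (ball x r))
                  (𝓝[>] (0:ℝ)) ∧
              Filter.limsup
                  (fun r : ℝ => ENNReal.ofReal r *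
                    totVarOn μ (E.indicator fun _ => (1:ℝ)) (ball x r) / μ (ball x r))
                  (𝓝[>] (0:ℝ)) ≤ (Cd : ℝ≥0∞) := by
  obtain ⟨c, hc, h⟩ := statement3_general.{u} Cd CP
  exact ⟨c, hc, fun X _ _ _ μ ⟨_, _, _, hd, hP⟩ => have : Nonempty X := inferInstance; h X μ hd hP⟩

end
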